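/- arXiv:2105.08860 — 2 statements merged into one kernel-verified Lean document; each statement's English description precedes it below -/
import Mathlib

section
/- Let p and q be coprime square-free positive integers, neither of which lies in {2, 3, 5, 6, 7, 13}, and which are not both congruent to 3 modulo 4. Then for K = ℚ(√p, √q), the Pythagoras number of the ring of integers O_K is at least 6. -/
/-!
With `s = √p` and `t = √q`, the element `α = 7 + ω_p² + ω_q²`, where `ω_n = (1 + √n) / 2` if
`n ≡ 1 (mod 4)` and `ω_n = 1 + √n` otherwise, is a sum of six squares of algebraic integers (as
`7 = 2² + 1 + 1 + 1`) but not of five.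

Suppose `α = ∑ xᵢ²` over `i < 5`, with `xᵢ = aᵢ + bᵢ s + cᵢ t + dᵢ s t` and rational coordinates
(`mem_coords`). Since `1, s, t, st` are independent over `ℚ` (`lin_indep_four`), comparing
coordinates gives four equations (`exists_fiveCoords`). Conjugates of algebraic integers are
algebraic integers (`isIntegral_conj`), so the traces of `xᵢ` to the quadratic subfields and its
norm to `ℚ(s)` are quadratic integers; this bounds the denominators and yields parity relations
between the coordinates (`integer_coords`).

The rational coordinate of `α` is too small for any `dᵢ ≠ 0`. With `d = 0`, it is also so small
that the vectors `b` and `c`, which are nonzero because the coefficients of `s` and `t` in `α` are,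
must be signed unit vectors up to the common scaling. They are orthogonal because the coefficient
of `st` vanishes, so two entries of `a` are determined up to sign and the remaining three must have
squares summing to `7`, or be even with squares summing to `28`; neither is possible
(`unit_vectors`, `not_seven`). The bounds on `p` and `q` used in the three residue cases come
from `residue_bound`; the exceptional set excludes precisely the smaller values.
-/

/-- The totally real biquadratic field `ℚ(√p, √q)` as a subfield of `ℝ`. -/
noncomputable def biqField (p q : ℕ) : IntermediateField ℚ ℝ :=
  IntermediateField.adjoin ℚ {Real.sqrt p, Real.sqrt q}

/-- The ring of integers of a subfield `K` of `ℝ`, viewed as the set of elements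
of `K` that are integral over `ℤ`. -/
def ringOfInt (K : IntermediateField ℚ ℝ) : Set ℝ :=
  {x : ℝ | x ∈ K ∧ IsIntegral ℤ x}

/-- `α` is a sum of `n` squares of elements of `S`. -/
def SumOfNSquaresIn (S : Set ℝ) (n : ℕ) (α : ℝ) : Prop :=
  ∃ x : Fin n → ℝ, (∀ i, x i ∈ S) ∧ α = ∑ i, x i ^ 2

/-- `α` is a sum of squares of elements of `S`. -/
def IsSumOfSquaresIn (S : Set ℝ) (α : ℝ) : Prop := ∃ n, SumOfNSquaresIn S n α

/-- `K` is a totally real biquadratic field. -/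
def IsBiquadratic (K : IntermediateField ℚ ℝ) : Prop :=
  ∃ p q : ℕ, Squarefree p ∧ Squarefree q ∧ 1 < p ∧ 1 < q ∧ p ≠ q ∧ K = biqField p q

/-! ### Vectors of five integers -/

lemma sum_sq_eq_one {b : Fin 5 → ℤ} (h : ∑ i, b i ^ 2 = 1) :
    ∃ i, b i ^ 2 = 1 ∧ ∀ j, j ≠ i → b j = 0 := by
  obtain ⟨i, hi⟩ : ∃ i, b i ≠ 0 := by
    by_contra! hb
    simp [hb] at h
  have hsplit := Finset.add_sum_erase Finset.univ (fun i => b i ^ 2) (Finset.mem_univ i)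
  have hpos : 0 < b i ^ 2 := by positivity
  have hnn : 0 ≤ ∑ j ∈ Finset.univ.erase i, b j ^ 2 := Finset.sum_nonneg fun j _ => sq_nonneg _
  have hz : ∑ j ∈ Finset.univ.erase i, b j ^ 2 = 0 := by omega
  refine ⟨i, by omega, fun j hj => ?_⟩
  have := (Finset.sum_eq_zero_iff_of_nonneg fun j _ => sq_nonneg (b j)).1 hz j (by simp [hj])
  simpa using this

/-- If `b` and `c` are orthogonal integral vectors of norm one, they are `± eᵢ` and `± eⱼ` with `i ≠ j`;
the inner products of `a` with them determine `aᵢ²` and `aⱼ²`, and three entries of `a` remain. -/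
lemma unit_vectors {a b c : Fin 5 → ℤ} {u v : ℤ} (hb : ∑ i, b i ^ 2 = 1) (hc : ∑ i, c i ^ 2 = 1)
    (hbc : ∑ i, b i * c i = 0) (hab : ∑ i, a i * b i = u) (hac : ∑ i, a i * c i = v) :
    ∃ x y z, (b x = 0 ∧ b y = 0 ∧ b z = 0) ∧ (c x = 0 ∧ c y = 0 ∧ c z = 0) ∧
      ∑ i, a i ^ 2 = u ^ 2 + v ^ 2 + a x ^ 2 + a y ^ 2 + a z ^ 2 := by
  obtain ⟨i, hi, hi0⟩ := sum_sq_eq_one hb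
  obtain ⟨j, hj, hj0⟩ := sum_sq_eq_one hc
  have e1 : ∑ k, a k * b k = a i * b i :=
    Finset.sum_eq_single i (fun k _ hk => by simp [hi0 k hk]) (by simp)
  have e2 : ∑ k, a k * c k = a j * c j :=
    Finset.sum_eq_single j (fun k _ hk => by simp [hj0 k hk]) (by simp)
  have hij : i ≠ j := by
    rintro rfl
    have e3 : ∑ k, b k * c k = b i * c i :=
      Finset.sum_eq_single i (fun k _ hk => by simp [hi0 k hk]) (by simp)
    have h1 : (b i * c i) ^ 2 = 1 := by rw [mul_pow, hi, hj]; rfl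
    rw [← e3, hbc] at h1
    simp at h1
  have hperm : ∀ i j : Fin 5, i ≠ j → ∃ x y z : Fin 5,
      [i, j, x, y, z].Nodup ∧ Finset.univ = {i, j, x, y, z} := by
    decide
  obtain ⟨x, y, z, hnd, huniv⟩ := hperm i j hij
  simp only [List.nodup_cons, List.mem_cons, List.not_mem_nil, not_or, or_false] at hnd
  obtain ⟨⟨-, hix, hiy, hiz⟩, ⟨hjx, hjy, hjz⟩, ⟨hxy, hxz⟩, hyz, -⟩ := hnd
  refine ⟨x, y, z, ⟨hi0 x (Ne.symm hix), hi0 y (Ne.symm hiy), hi0 z (Ne.symm hiz)⟩,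
    ⟨hj0 x (Ne.symm hjx), hj0 y (Ne.symm hjy), hj0 z (Ne.symm hjz)⟩, ?_⟩
  have hu : a i ^ 2 = u ^ 2 := by rw [← hab, e1, mul_pow, hi, mul_one]
  have hv : a j ^ 2 = v ^ 2 := by rw [← hac, e2, mul_pow, hj, mul_one]
  rw [huniv, Finset.sum_insert (by simp [hij, hix, hiy, hiz]),
    Finset.sum_insert (by simp [hjx, hjy, hjz]),
    Finset.sum_insert (by simp [hxy, hxz]), Finset.sum_insert (by simp [hyz]),
    Finset.sum_singleton, hu, hv]
  ring

lemma not_seven (x y z : ℤ) : x ^ 2 + y ^ 2 + z ^ 2 ≠ 7 := by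
  intro h
  have h8 : ((x : ZMod 8)) ^ 2 + (y : ZMod 8) ^ 2 + (z : ZMod 8) ^ 2 = 7 := by exact_mod_cast congrArg (Int.cast : ℤ → ZMod 8) h
  revert h8
  generalize (x : ZMod 8) = x
  generalize (y : ZMod 8) = y
  generalize (z : ZMod 8) = z
  revert x y z
  decide

lemma not_twentyeight {x y z : ℤ} (hx : 2 ∣ x) (hy : 2 ∣ y) (hz : 2 ∣ z) :
    x ^ 2 + y ^ 2 + z ^ 2 ≠ 28 := by
  obtain ⟨x, rfl⟩ := hx
  obtain ⟨y, rfl⟩ := hy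
  obtain ⟨z, rfl⟩ := hz
  intro h
  exact not_seven x y z (by linarith)

lemma one_le_sum_sq {a b : Fin 5 → ℤ} (h : ∑ i, a i * b i ≠ 0) : 1 ≤ ∑ i, b i ^ 2 := by
  by_contra hlt
  have hnn : 0 ≤ ∑ i, b i ^ 2 := Finset.sum_nonneg fun j _ => sq_nonneg _
  have hz : ∑ i, b i ^ 2 = 0 := by omega
  have h0 := (Finset.sum_eq_zero_iff_of_nonneg fun j _ => sq_nonneg (b j)).1 hz
  apply h
  refine Finset.sum_eq_zero fun i hi => ?_
  have : b i = 0 := by simpa using h0 i hi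
  simp [this]

lemma sum_quad (p q : ℤ) (a b c : Fin 5 → ℤ) :
    ∑ i, (a i ^ 2 + p * b i ^ 2 + q * c i ^ 2) =
      ∑ i, a i ^ 2 + p * ∑ i, b i ^ 2 + q * ∑ i, c i ^ 2 := by
  simp only [Finset.sum_add_distrib, Finset.mul_sum]

lemma core_one_one {p q : ℤ} (hp : 17 ≤ p) (hq : 17 ≤ q) {a b c : Fin 5 → ℤ}
    (hpar : ∀ i, 2 ∣ a i + b i + c i)
    (hsum : ∑ i, (a i ^ 2 + p * b i ^ 2 + q * c i ^ 2) = 30 + p + q)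
    (hab : ∑ i, a i * b i = 1) (hac : ∑ i, a i * c i = 1) (hbc : ∑ i, b i * c i = 0) : False := by
  rw [sum_quad] at hsum
  have hA : 0 ≤ ∑ i, a i ^ 2 := Finset.sum_nonneg fun j _ => sq_nonneg _
  have hB := one_le_sum_sq (a := a) (b := b) (by omega)
  have hC := one_le_sum_sq (a := a) (b := c) (by omega)
  -- Multiplying the parity relation by `b` (resp. `c`) and summing makes both norms odd.
  have hBodd : 2 ∣ ∑ i, a i * b i + ∑ i, b i ^ 2 + ∑ i, b i * c i := by
    rw [← Finset.sum_add_distrib, ← Finset.sum_add_distrib]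
    refine Finset.dvd_sum fun i _ => ?_
    convert (hpar i).mul_right (b i) using 1
    ring
  have hCodd : 2 ∣ ∑ i, a i * c i + ∑ i, c i ^ 2 + ∑ i, b i * c i := by
    rw [← Finset.sum_add_distrib, ← Finset.sum_add_distrib]
    refine Finset.dvd_sum fun i _ => ?_
    convert (hpar i).mul_right (c i) using 1
    ring
  have hB1 : ∑ i, b i ^ 2 = 1 := by
    by_contra hne
    have : 3 ≤ ∑ i, b i ^ 2 := by omega
    nlinarith
  have hC1 : ∑ i, c i ^ 2 = 1 := by
    by_contra hne
    have : 3 ≤ ∑ i, c i ^ 2 := by omega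
    nlinarith
  obtain ⟨x, y, z, ⟨bx, hy, bz⟩, ⟨cx, cy, cz⟩, h⟩ := unit_vectors hB1 hC1 hbc hab hac
  have px := hpar x
  have py := hpar y
  have pz := hpar z
  rw [hB1, hC1] at hsum
  exact not_twentyeight (x := a x) (y := a y) (z := a z) (by omega) (by omega) (by omega)
    (by linarith)

lemma core_one_other {p q : ℤ} (hp : 17 ≤ p) (hq : 10 ≤ q) {a b c : Fin 5 → ℤ}
    (hpar : ∀ i, 2 ∣ a i + b i)
    (hsum : ∑ i, (a i ^ 2 + p * b i ^ 2 + 4 * q * c i ^ 2) = 33 + p + 4 * q)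
    (hab : ∑ i, a i * b i = 1) (hac : ∑ i, a i * c i = 2) (hbc : ∑ i, b i * c i = 0) : False := by
  rw [sum_quad] at hsum
  have hA : 0 ≤ ∑ i, a i ^ 2 := Finset.sum_nonneg fun j _ => sq_nonneg _
  have hB := one_le_sum_sq (a := a) (b := b) (by omega)
  have hC := one_le_sum_sq (a := a) (b := c) (by omega)
  have hBodd : 2 ∣ ∑ i, a i * b i + ∑ i, b i ^ 2 := by
    rw [← Finset.sum_add_distrib]
    refine Finset.dvd_sum fun i _ => ?_
    convert (hpar i).mul_right (b i) using 1
    ring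
  have hB1 : ∑ i, b i ^ 2 = 1 := by
    by_contra hne
    have : 3 ≤ ∑ i, b i ^ 2 := by omega
    nlinarith
  have hC1 : ∑ i, c i ^ 2 = 1 := by
    by_contra hne
    have : 2 ≤ ∑ i, c i ^ 2 := by omega
    nlinarith
  obtain ⟨x, y, z, ⟨bx, hy, bz⟩, ⟨cx, cy, cz⟩, h⟩ := unit_vectors hB1 hC1 hbc hab hac
  have px := hpar x
  have py := hpar y
  have pz := hpar z
  rw [hB1, hC1] at hsum
  exact not_twentyeight (x := a x) (y := a y) (z := a z) (by omega) (by omega) (by omega)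
    (by linarith)

lemma core_two_three {p q : ℤ} (hp : 10 ≤ p) (hq : 10 ≤ q) {a b c : Fin 5 → ℤ}
    (hsum : ∑ i, (a i ^ 2 + p * b i ^ 2 + q * c i ^ 2) = 9 + p + q)
    (hab : ∑ i, a i * b i = 1) (hac : ∑ i, a i * c i = 1) (hbc : ∑ i, b i * c i = 0) : False := by
  rw [sum_quad] at hsum
  have hA : 0 ≤ ∑ i, a i ^ 2 := Finset.sum_nonneg fun j _ => sq_nonneg _
  have hB := one_le_sum_sq (a := a) (b := b) (by omega)
  have hC := one_le_sum_sq (a := a) (b := c) (by omega)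
  have hB1 : ∑ i, b i ^ 2 = 1 := by
    by_contra hne
    have : 2 ≤ ∑ i, b i ^ 2 := by omega
    nlinarith
  have hC1 : ∑ i, c i ^ 2 = 1 := by
    by_contra hne
    have : 2 ≤ ∑ i, c i ^ 2 := by omega
    nlinarith
  obtain ⟨x, y, z, -, -, h⟩ := unit_vectors hB1 hC1 hbc hab hac
  rw [hB1, hC1] at hsum
  exact not_seven (a x) (a y) (a z) (by linarith)

/-- If `n ≡ 2, 3 (mod 4)`, then `(E + F√n) / 2` has integral norm only when `E` and `F` are even. -/
lemma even_of_mod {n E F : ℤ} (hn : n % 4 = 2 ∨ n % 4 = 3) (h : 4 ∣ E ^ 2 - n * F ^ 2) :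
    2 ∣ E ∧ 2 ∣ F := by
  obtain ⟨m, hm⟩ : ∃ m, n = 4 * m + n % 4 := ⟨n / 4, by omega⟩
  obtain ⟨k, hk⟩ := h
  rcases Int.even_or_odd' E with ⟨e, rfl | rfl⟩ <;> rcases Int.even_or_odd' F with ⟨f, rfl | rfl⟩ <;>
    rcases hn with hn | hn <;> rw [hn] at hm <;> subst hm <;> ring_nf at hk <;> omega

/-- If `n ≡ 1 (mod 4)`, then `(E + F√n) / 2` has integral norm only when `E ≡ F (mod 2)`. -/
lemma parity_of_mod {n E F : ℤ} (hn : n % 4 = 1) (h : 4 ∣ E ^ 2 - n * F ^ 2) : 2 ∣ E + F := by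
  obtain ⟨m, hm⟩ : ∃ m, n = 4 * m + 1 := ⟨n / 4, by omega⟩
  obtain ⟨k, hk⟩ := h
  rcases Int.even_or_odd' E with ⟨e, rfl | rfl⟩ <;> rcases Int.even_or_odd' F with ⟨f, rfl | rfl⟩ <;>
    subst hm <;> ring_nf at hk <;> omega

/-! ### Algebraic integers in a biquadratic field -/

lemma isIntegral_of_eq_add {x y z : ℝ} (hx : IsIntegral ℤ x) (hy : IsIntegral ℤ y)
    (h : z = x + y) : IsIntegral ℤ z := h ▸ hx.add hy

lemma isIntegral_of_eq_mul {x y z : ℝ} (hx : IsIntegral ℤ x) (hy : IsIntegral ℤ y)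
    (h : z = x * y) : IsIntegral ℤ z := h ▸ hx.mul hy

lemma exists_int_of_isIntegral {e : ℚ} (h : IsIntegral ℤ (e : ℝ)) : ∃ n : ℤ, e = n := by
  have h' : IsIntegral ℤ e := by
    have := (isIntegral_algebraMap_iff (R := ℤ) (A := ℚ) (B := ℝ) (x := e)
      (algebraMap ℚ ℝ).injective).1 (by simpa using h)
    exact this
  obtain ⟨n, hn⟩ := IsIntegrallyClosed.isIntegral_iff.1 h'
  exact ⟨n, by simpa using hn.symm⟩

lemma exists_int_of_sq {n : ℕ} (hn : Squarefree n) {g : ℚ} {m : ℤ} (h : (n : ℚ) * g ^ 2 = m) :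
    ∃ l : ℤ, g = l := by
  have hn0 : (n : ℚ) ≠ 0 := by exact_mod_cast hn.ne_zero
  have hsq : ((n : ℚ) * g) ^ 2 = ((n * m : ℤ) : ℚ) := by push_cast; rw [← h]; ring
  have hint : IsIntegral ℤ ((n : ℚ) * g) := by
    refine IsIntegral.of_pow (n := 2) two_pos ?_
    rw [hsq]
    exact isIntegral_algebraMap (R := ℤ) (A := ℚ) (x := n * m)
  obtain ⟨k, hk⟩ := IsIntegrallyClosed.isIntegral_iff.1 hint
  replace hk : (k : ℚ) = n * g := by simpa using hk
  have hk2 : k ^ 2 = n * m := by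
    rw [← hk] at hsq
    exact_mod_cast hsq
  have hdvd : (n : ℤ) ∣ k :=
    ((Int.squarefree_natCast.2 hn).dvd_pow_iff_dvd two_ne_zero).1 ⟨m, hk2⟩
  obtain ⟨l, rfl⟩ := hdvd
  refine ⟨l, ?_⟩
  push_cast at hk
  exact (mul_left_cancel₀ hn0 hk).symm

/-- If `e + f√n` and its conjugate are integral, trace and norm show that it is `(E + F√n) / 2` with
integers `E`, `F` and `4 ∣ E² - nF²`. -/
lemma quadratic_integer {n : ℕ} (hn : Squarefree n) {s : ℝ} (hs : s ^ 2 = n) {e f : ℚ}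
    (h1 : IsIntegral ℤ (e + f * s : ℝ)) (h2 : IsIntegral ℤ (e - f * s : ℝ)) :
    ∃ E F : ℤ, 2 * e = E ∧ 2 * f = F ∧ (4 : ℤ) ∣ E ^ 2 - n * F ^ 2 := by
  obtain ⟨E, hE⟩ : ∃ E : ℤ, 2 * e = E := by
    apply exists_int_of_isIntegral
    refine isIntegral_of_eq_add h1 h2 ?_
    push_cast; ring
  obtain ⟨N, hN⟩ : ∃ N : ℤ, e ^ 2 - n * f ^ 2 = N := by
    apply exists_int_of_isIntegral
    refine isIntegral_of_eq_mul h1 h2 ?_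
    push_cast; linear_combination (f : ℝ) ^ 2 * hs
  obtain ⟨F, hF⟩ : ∃ F : ℤ, 2 * f = F := by
    apply exists_int_of_sq hn (m := E ^ 2 - 4 * N)
    push_cast
    rw [← hE, ← hN]; ring
  refine ⟨E, F, hE, hF, N, ?_⟩
  have : (E : ℚ) ^ 2 - n * F ^ 2 = 4 * N := by rw [← hE, ← hF, ← hN]; ring
  exact_mod_cast this

lemma irrational_of_sq {n : ℕ} (hn : Squarefree n) (hn1 : 1 < n) {s : ℝ} (hs : s ^ 2 = n) :
    Irrational s := by
  rintro ⟨g, rfl⟩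
  have hg : g ^ 2 = (n : ℚ) := by exact_mod_cast hs
  obtain ⟨l, rfl⟩ := exists_int_of_sq hn (g := g) (m := n ^ 2) (by rw [hg]; push_cast; ring)
  have hl : l * l = (n : ℤ) := by rw [← sq]; exact_mod_cast hg
  have hu := Int.squarefree_natCast.2 hn l ⟨1, by rw [mul_one, hl]⟩
  have : (l * l).natAbs = 1 := by
    rw [Int.natAbs_mul, Int.isUnit_iff_natAbs_eq.1 hu]
  omega

lemma lin_indep {s : ℝ} (hs : Irrational s) {A B : ℚ} (h : (A + B * s : ℝ) = 0) :
    A = 0 ∧ B = 0 := by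
  have hB : B = 0 := by
    by_contra hB
    apply hs
    refine ⟨-A / B, ?_⟩
    have : (B : ℝ) ≠ 0 := by exact_mod_cast hB
    push_cast
    field_simp
    linarith
  subst hB
  simpa using h

/-- The square roots of two coprime squarefree integers exceeding `1` generate a field of degree
four: `1, s, t, st` are linearly independent over `ℚ`. -/
lemma lin_indep_four {p q : ℕ} (hp : Squarefree p) (hq : Squarefree q) (hp1 : 1 < p) (hq1 : 1 < q)
    (hcop : Nat.Coprime p q) {s t : ℝ} (hs : s ^ 2 = p) (ht : t ^ 2 = q) {A B C D : ℚ}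
    (h : (A + B * s + C * t + D * (s * t) : ℝ) = 0) : A = 0 ∧ B = 0 ∧ C = 0 ∧ D = 0 := by
  have is := irrational_of_sq hp hp1 hs
  have it := irrational_of_sq hq hq1 ht
  have ist : Irrational (s * t) := irrational_of_sq (n := p * q)
    ((Nat.squarefree_mul hcop).2 ⟨hp, hq⟩) (by nlinarith) (by push_cast; rw [mul_pow, hs, ht])
  by_cases hCD : C = 0 ∧ D = 0
  · obtain ⟨rfl, rfl⟩ := hCD
    have := lin_indep is (A := A) (B := B) (by simpa using h)
    simp [this]
  exfalso
  -- Otherwise `t = e + f * s` with `e, f` rational, and `t ^ 2 = q` forces `e * f = 0`.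
  set N : ℚ := C ^ 2 - p * D ^ 2 with hN
  have hNr : (N : ℝ) = (C + D * s) * (C - D * s) := by
    rw [hN]; push_cast; linear_combination (D : ℝ) ^ 2 * hs
  have hN0 : (N : ℝ) ≠ 0 := by
    rw [hNr]
    refine mul_ne_zero (fun h0 => hCD (lin_indep is h0)) fun h0 => hCD ?_
    have := lin_indep is (A := C) (B := -D) (by push_cast; linarith)
    simpa using this
  have hN0q : N ≠ 0 := by exact_mod_cast hN0
  obtain ⟨e, f, hef⟩ : ∃ e f : ℚ, t = e + f * s := by
    refine ⟨-(A * C - p * B * D) / N, -(B * C - A * D) / N, ?_⟩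
    push_cast
    field_simp
    rw [hNr]
    linear_combination (C - D * s) * h + (B : ℝ) * D * hs
  have hsq := lin_indep is (A := e ^ 2 + p * f ^ 2 - q) (B := 2 * (e * f)) (by
    push_cast; rw [hef] at ht; linear_combination ht - (f : ℝ) ^ 2 * hs)
  have hef0 : e * f = 0 := by linarith [hsq.2]
  rcases mul_eq_zero.1 hef0 with h0 | h0
  · exact ist ⟨f * p, by push_cast; rw [hef, h0]; push_cast; linear_combination -(f : ℝ) * hs⟩
  · exact it ⟨e, by rw [hef, h0]; simp⟩

/-- An integer polynomial evaluated at `a + b s + c t + d s t` has coordinates that do not depend on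
the choice of signs of the square roots `s` and `t`. -/
lemma aeval_coords {p q : ℕ} {s t : ℝ} (hs : s ^ 2 = p) (ht : t ^ 2 = q) (a b c d : ℚ)
    (f : Polynomial ℤ) : ∃ A B C D : ℚ, ∀ ε δ : ℝ, ε ^ 2 = 1 → δ ^ 2 = 1 →
      Polynomial.aeval (a + b * (ε * s) + c * (δ * t) + d * (ε * s * (δ * t)) : ℝ) f =
        A + B * (ε * s) + C * (δ * t) + D * (ε * s * (δ * t)) := by
  induction f using Polynomial.induction_on' with
  | add f g hf hg =>
    obtain ⟨A, B, C, D, h⟩ := hf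
    obtain ⟨A', B', C', D', h'⟩ := hg
    refine ⟨A + A', B + B', C + C', D + D', fun ε δ hε hδ => ?_⟩
    rw [map_add, h ε δ hε hδ, h' ε δ hε hδ]
    push_cast; ring
  | monomial n m =>
    induction n with
    | zero => exact ⟨m, 0, 0, 0, fun ε δ _ _ => by simp⟩
    | succ n ih =>
      obtain ⟨A, B, C, D, h⟩ := ih
      refine ⟨A * a + p * B * b + q * C * c + p * q * D * d, A * b + B * a + q * (C * d + D * c),
        A * c + C * a + p * (B * d + D * b), A * d + D * a + B * c + C * b,
        fun ε δ hε hδ => ?_⟩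
      have hs' : (ε * s) ^ 2 = p := by rw [mul_pow, hε, hs, one_mul]
      have ht' : (δ * t) ^ 2 = q := by rw [mul_pow, hδ, ht, one_mul]
      rw [← Polynomial.monomial_mul_X, map_mul, h ε δ hε hδ, Polynomial.aeval_X]
      generalize ε * s = s at *
      generalize δ * t = t at *
      push_cast
      rw [← hs', ← ht']
      ring

/-- Flipping the signs of the square roots preserves integrality. -/
lemma isIntegral_conj {p q : ℕ} (hp : Squarefree p) (hq : Squarefree q) (hp1 : 1 < p) (hq1 : 1 < q)
    (hcop : Nat.Coprime p q) {s t : ℝ} (hs : s ^ 2 = p) (ht : t ^ 2 = q) {a b c d : ℚ}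
    (h : IsIntegral ℤ (a + b * s + c * t + d * (s * t) : ℝ)) {ε δ : ℝ} (hε : ε ^ 2 = 1)
    (hδ : δ ^ 2 = 1) :
    IsIntegral ℤ (a + b * (ε * s) + c * (δ * t) + d * (ε * s * (δ * t)) : ℝ) := by
  obtain ⟨f, hf, hf0⟩ := h
  obtain ⟨A, B, C, D, hABCD⟩ := aeval_coords hs ht a b c d f
  have h1 := hABCD 1 1 (by norm_num) (by norm_num)
  simp only [one_mul] at h1
  rw [Polynomial.aeval_def, hf0] at h1
  obtain ⟨rfl, rfl, rfl, rfl⟩ := lin_indep_four hp hq hp1 hq1 hcop hs ht h1.symm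
  refine ⟨f, hf, ?_⟩
  rw [← Polynomial.aeval_def, hABCD ε δ hε hδ]
  simp

/-- Necessary conditions for `a + b s + c t + d s t` to be an algebraic integer. They express that
its traces to the three quadratic subfields, and its norm to `ℚ(s)`, are quadratic integers. -/
lemma integer_coords {p q : ℕ} (hp : Squarefree p) (hq : Squarefree q) (hp1 : 1 < p) (hq1 : 1 < q)
    (hcop : Nat.Coprime p q) {s t : ℝ} (hs : s ^ 2 = p) (ht : t ^ 2 = q) {a b c d : ℚ}
    (h : IsIntegral ℤ (a + b * s + c * t + d * (s * t) : ℝ)) :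
    (∃ A B C D : ℤ, 4 * a = A ∧ 4 * b = B ∧ 4 * c = C ∧ 4 * d = D ∧
      (4 : ℤ) ∣ A ^ 2 - p * B ^ 2 ∧ (4 : ℤ) ∣ A ^ 2 - q * C ^ 2 ∧
      (4 : ℤ) ∣ A ^ 2 - (p * q : ℕ) * D ^ 2) ∧
    ∃ E F : ℤ, 2 * (a ^ 2 + p * b ^ 2 - q * c ^ 2 - p * q * d ^ 2) = E ∧
      4 * (a * b - q * c * d) = F ∧ (4 : ℤ) ∣ E ^ 2 - p * F ^ 2 := by
  have key := fun ε δ : ℝ => @isIntegral_conj p q hp hq hp1 hq1 hcop s t hs ht a b c d h ε δ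
  have h2 := key 1 (-1) (by norm_num) (by norm_num)
  have h3 := key (-1) 1 (by norm_num) (by norm_num)
  have h4 := key (-1) (-1) (by norm_num) (by norm_num)
  obtain ⟨A, B, hA, hB, hAB⟩ := quadratic_integer hp hs (e := 2 * a) (f := 2 * b)
    (by refine isIntegral_of_eq_add h h2 ?_; push_cast; ring) (by refine isIntegral_of_eq_add h3 h4 ?_; push_cast; ring)
  obtain ⟨A', C, hA', hC, hAC⟩ := quadratic_integer hq ht (e := 2 * a) (f := 2 * c)
    (by refine isIntegral_of_eq_add h h3 ?_; push_cast; ring) (by refine isIntegral_of_eq_add h2 h4 ?_; push_cast; ring)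
  obtain ⟨A'', D, hA'', hD, hAD⟩ := quadratic_integer ((Nat.squarefree_mul hcop).2 ⟨hp, hq⟩)
    (s := s * t) (by push_cast; rw [mul_pow, hs, ht]) (e := 2 * a) (f := 2 * d)
    (by refine isIntegral_of_eq_add h h4 ?_; push_cast; ring) (by refine isIntegral_of_eq_add h2 h3 ?_; push_cast; ring)
  obtain rfl : A' = A := by rw [hA] at hA'; exact_mod_cast hA'.symm
  obtain rfl : A'' = A' := by rw [hA] at hA''; exact_mod_cast hA''.symm
  refine ⟨⟨A'', B, C, D, by rw [← hA]; ring, by rw [← hB]; ring, by rw [← hC]; ring,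
    by rw [← hD]; ring, hAB, hAC, hAD⟩, ?_⟩
  obtain ⟨E, F, hE, hF, hEF⟩ := quadratic_integer hp hs
    (e := a ^ 2 + p * b ^ 2 - q * c ^ 2 - p * q * d ^ 2) (f := 2 * (a * b - q * c * d))
    (by refine isIntegral_of_eq_mul h h2 ?_; push_cast; rw [← hs, ← ht]; ring)
    (by refine isIntegral_of_eq_mul h3 h4 ?_; push_cast; rw [← hs, ← ht]; ring)
  exact ⟨E, F, hE, by rw [← hF]; ring, hEF⟩

/-! ### Sums of five squares -/

lemma mem_coords {p q : ℕ} {x : ℝ} (hx : x ∈ biqField p q) : ∃ a b c d : ℚ,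
    x = a + b * √(p : ℝ) + c * √(q : ℝ) + d * (√(p : ℝ) * √(q : ℝ)) := by
  have hs : √(p : ℝ) ^ 2 = p := Real.sq_sqrt (Nat.cast_nonneg p)
  have ht : √(q : ℝ) ^ 2 = q := Real.sq_sqrt (Nat.cast_nonneg q)
  have halg : ∀ y ∈ ({√(p : ℝ), √(q : ℝ)} : Set ℝ), IsAlgebraic ℚ y := by
    rintro y (rfl | rfl)
    · refine IsAlgebraic.of_pow two_pos ?_
      rw [hs]; exact isAlgebraic_algebraMap (R := ℚ) (A := ℝ) (p : ℚ)
    · refine IsAlgebraic.of_pow two_pos ?_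
      rw [ht]; exact isAlgebraic_algebraMap (R := ℚ) (A := ℝ) (q : ℚ)
  have hx' : x ∈ Algebra.adjoin ℚ ({√(p : ℝ), √(q : ℝ)} : Set ℝ) := by
    rw [← IntermediateField.adjoin_toSubalgebra_of_isAlgebraic halg]
    exact hx
  clear hx
  generalize √(p : ℝ) = s at *
  generalize √(q : ℝ) = t at *
  induction hx' using Algebra.adjoin_induction with
  | mem y hy =>
    rcases hy with rfl | rfl
    · exact ⟨0, 1, 0, 0, by simp⟩
    · exact ⟨0, 0, 1, 0, by simp⟩
  | algebraMap r => exact ⟨r, 0, 0, 0, by simp⟩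
  | add x y _ _ hx hy =>
    obtain ⟨A, B, C, D, rfl⟩ := hx
    obtain ⟨a, b, c, d, rfl⟩ := hy
    exact ⟨A + a, B + b, C + c, D + d, by push_cast; ring⟩
  | mul x y _ _ hx hy =>
    obtain ⟨A, B, C, D, rfl⟩ := hx
    obtain ⟨a, b, c, d, rfl⟩ := hy
    refine ⟨A * a + p * B * b + q * C * c + p * q * D * d, A * b + B * a + q * (C * d + D * c),
        A * c + C * a + p * (B * d + D * b), A * d + D * a + B * c + C * b, ?_⟩
    push_cast
    rw [← hs, ← ht]
    ring

/-- `FiveCoords p q k₀ k₁ k₂ a b c d`: the five elements `aᵢ + bᵢ√p + cᵢ√q + dᵢ√p√q` satisfy the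
integrality conditions of `integer_coords`, and comparing coordinates their squares sum to
`k₀ + k₁√p + k₂√q`. -/
structure FiveCoords (p q : ℕ) (k₀ k₁ k₂ : ℚ) (a b c d : Fin 5 → ℚ) : Prop where
  int : ∀ i, (∃ A B C D : ℤ, 4 * a i = A ∧ 4 * b i = B ∧ 4 * c i = C ∧ 4 * d i = D ∧
      (4 : ℤ) ∣ A ^ 2 - p * B ^ 2 ∧ (4 : ℤ) ∣ A ^ 2 - q * C ^ 2 ∧
      (4 : ℤ) ∣ A ^ 2 - (p * q : ℕ) * D ^ 2) ∧
    ∃ E F : ℤ, 2 * (a i ^ 2 + p * b i ^ 2 - q * c i ^ 2 - p * q * d i ^ 2) = E ∧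
      4 * (a i * b i - q * c i * d i) = F ∧ (4 : ℤ) ∣ E ^ 2 - p * F ^ 2
  one : ∑ i, (a i ^ 2 + p * b i ^ 2 + q * c i ^ 2 + p * q * d i ^ 2) = k₀
  sqrtp : 2 * ∑ i, (a i * b i + q * (c i * d i)) = k₁
  sqrtq : 2 * ∑ i, (a i * c i + p * (b i * d i)) = k₂
  sqrtpq : ∑ i, (a i * d i + b i * c i) = 0

lemma exists_fiveCoords {p q : ℕ} (hp : Squarefree p) (hq : Squarefree q) (hp1 : 1 < p)
    (hq1 : 1 < q) (hcop : Nat.Coprime p q) {k₀ k₁ k₂ : ℚ}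
    (h : SumOfNSquaresIn (ringOfInt (biqField p q)) 5 (k₀ + k₁ * √(p : ℝ) + k₂ * √(q : ℝ))) :
    ∃ a b c d, FiveCoords p q k₀ k₁ k₂ a b c d := by
  have hs : √(p : ℝ) ^ 2 = p := Real.sq_sqrt (Nat.cast_nonneg p)
  have ht : √(q : ℝ) ^ 2 = q := Real.sq_sqrt (Nat.cast_nonneg q)
  obtain ⟨x, hx, hsum⟩ := h
  choose a b c d habcd using fun i => mem_coords (hx i).1
  have hlin := lin_indep_four hp hq hp1 hq1 hcop hs ht
    (A := ∑ i, (a i ^ 2 + p * b i ^ 2 + q * c i ^ 2 + p * q * d i ^ 2) - k₀)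
    (B := 2 * ∑ i, (a i * b i + q * (c i * d i)) - k₁)
    (C := 2 * ∑ i, (a i * c i + p * (b i * d i)) - k₂)
    (D := 2 * ∑ i, (a i * d i + b i * c i)) (by
      simp only [habcd, Fin.sum_univ_five] at hsum
      push_cast
      simp only [Fin.sum_univ_five]
      generalize √(p : ℝ) = s at *
      generalize √(q : ℝ) = t at *
      rw [← hs, ← ht]
      linear_combination -hsum)
  obtain ⟨h0, h1, h2, h3⟩ := hlin
  refine ⟨a, b, c, d, fun i => ?_, by linarith, by linarith, by linarith, by linarith⟩
  refine integer_coords hp hq hp1 hq1 hcop hs ht ?_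
  rw [← habcd]
  exact (hx i).2

/-- The four coordinate equations after clearing a common denominator `m`. -/
lemma FiveCoords.scale {p q : ℕ} {k₀ k₁ k₂ : ℚ} {a b c d : Fin 5 → ℚ}
    (h : FiveCoords p q k₀ k₁ k₂ a b c d) (m : ℚ) {A B C D : Fin 5 → ℤ}
    (hA : ∀ i, m * a i = A i) (hB : ∀ i, m * b i = B i) (hC : ∀ i, m * c i = C i)
    (hD : ∀ i, m * d i = D i) :
    ((∑ i, (A i ^ 2 + p * B i ^ 2 + q * C i ^ 2 + p * q * D i ^ 2) : ℤ) : ℚ) = m ^ 2 * k₀ ∧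
    2 * ((∑ i, (A i * B i + q * (C i * D i)) : ℤ) : ℚ) = m ^ 2 * k₁ ∧
    2 * ((∑ i, (A i * C i + p * (B i * D i)) : ℤ) : ℚ) = m ^ 2 * k₂ ∧
    ((∑ i, (A i * D i + B i * C i) : ℤ) : ℚ) = 0 := by
  rw [← h.one, ← h.sqrtp, ← h.sqrtq]
  have h3 := h.sqrtpq
  push_cast
  simp only [← hA, ← hB, ← hC, ← hD, Fin.sum_univ_five] at h3 ⊢
  refine ⟨by ring, by ring, by ring, by linear_combination m ^ 2 * h3⟩

lemma one_le_sq {x : ℤ} (h : x ≠ 0) : 1 ≤ x ^ 2 := by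
  have : 0 < x ^ 2 := by positivity
  omega

lemma four_le_sq {x : ℤ} (h : x ≠ 0) (h2 : 2 ∣ x) : 4 ≤ x ^ 2 := by
  obtain ⟨y, rfl⟩ := h2
  have := one_le_sq (x := y) (by rintro rfl; simp at h)
  linarith

lemma term_le {p q : ℕ} (A B C D : Fin 5 → ℤ) (i : Fin 5) :
    A i ^ 2 + p * B i ^ 2 + q * C i ^ 2 + p * q * D i ^ 2 ≤
      ∑ i, (A i ^ 2 + p * B i ^ 2 + q * C i ^ 2 + p * q * D i ^ 2) :=
  Finset.single_le_sum (f := fun i => A i ^ 2 + p * B i ^ 2 + q * C i ^ 2 + p * q * D i ^ 2)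
    (fun i _ => by positivity) (Finset.mem_univ i)

/-- Case `p ≡ q ≡ 1 (mod 4)`, for `α = 7 + ((1 + √p) / 2)² + ((1 + √q) / 2)²`. The integers `4a`,
`4b`, `4c`, `4d` have the same parity, and the size of the rational coordinate forces `d = 0`. -/
lemma no_five_one_one {p q : ℕ} (hp : p % 4 = 1) (hq : q % 4 = 1) (hp17 : 17 ≤ p) (hq17 : 17 ≤ q)
    {a b c d : Fin 5 → ℚ}
    (h : FiveCoords p q (7 + (1 + p) / 4 + (1 + q) / 4) (1 / 2) (1 / 2) a b c d) : False := by
  have hp' : (17 : ℤ) ≤ p := by exact_mod_cast hp17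
  have hq' : (17 : ℤ) ≤ q := by exact_mod_cast hq17
  have hpq : (p * q) % 4 = 1 := by rw [Nat.mul_mod, hp, hq]
  choose hint hnorm using h.int
  choose A B C D hA hB hC hD hAB hAC hAD using hint
  have pAB := fun i => parity_of_mod (by omega) (hAB i)
  have pAC := fun i => parity_of_mod (by omega) (hAC i)
  have pAD := fun i => parity_of_mod (by omega) (hAD i)
  have hD0 : ∀ i, D i = 0 := by
    intro i
    by_contra hne
    have hsum : ∑ i, (A i ^ 2 + p * B i ^ 2 + q * C i ^ 2 + p * q * D i ^ 2) =
        120 + 4 * (p : ℤ) + 4 * q := by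
      have := (h.scale 4 hA hB hC hD).1
      rw [← Int.cast_inj (α := ℚ), this]
      push_cast; ring
    have hle := term_le (p := p) (q := q) A B C D i
    rw [hsum] at hle
    have := pAB i
    have := pAC i
    have := pAD i
    have hpq' : 0 ≤ ((p : ℤ) - 17) * (q - 17) := mul_nonneg (by linarith) (by linarith)
    have hpq0 : (0 : ℤ) ≤ p * q := by positivity
    by_cases hev : 2 ∣ D i
    · have h4 := mul_le_mul_of_nonneg_left (four_le_sq hne hev) hpq0
      have h1 := sq_nonneg (A i)
      have h2 : 0 ≤ (p : ℤ) * B i ^ 2 := by positivity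
      have h3 : 0 ≤ (q : ℤ) * C i ^ 2 := by positivity
      nlinarith
    · have h4 := mul_le_mul_of_nonneg_left (one_le_sq hne) hpq0
      have h1 := one_le_sq (x := A i) (by intro h0; omega)
      have h2 := mul_le_mul_of_nonneg_left (one_le_sq (x := B i) (by intro h0; omega))
        (Int.natCast_nonneg p)
      have h3 := mul_le_mul_of_nonneg_left (one_le_sq (x := C i) (by intro h0; omega))
        (Int.natCast_nonneg q)
      nlinarith
  have hd0 : ∀ i, d i = 0 := fun i => by simpa [hD0 i] using hD i
  have eA : ∀ i, 2 ∣ A i := fun i => by have := pAD i; rw [hD0 i] at this; omega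
  have eB : ∀ i, 2 ∣ B i := fun i => by have := pAB i; have := eA i; omega
  have eC : ∀ i, 2 ∣ C i := fun i => by have := pAC i; have := eA i; omega
  choose A' hA' using eA
  choose B' hB' using eB
  choose C' hC' using eC
  have hA2 : ∀ i, 2 * a i = A' i := fun i => by
    have := hA i; rw [hA' i] at this; push_cast at this; linarith
  have hB2 : ∀ i, 2 * b i = B' i := fun i => by
    have := hB i; rw [hB' i] at this; push_cast at this; linarith
  have hC2 : ∀ i, 2 * c i = C' i := fun i => by
    have := hC i; rw [hC' i] at this; push_cast at this; linarith
  obtain ⟨h0, h1, h2, h3⟩ := h.scale 2 hA2 hB2 hC2 (D := 0) (fun i => by simp [hd0 i])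
  simp only [Pi.zero_apply, mul_zero, add_zero, zero_add, ne_eq, OfNat.ofNat_ne_zero,
    not_false_eq_true, zero_pow] at h0 h1 h2 h3
  refine core_one_one hp' hq' (a := A') (b := B') (c := C') (fun i => ?_) ?_ ?_ ?_ ?_
  · obtain ⟨E, F, hE, hF, hEF⟩ := hnorm i
    have hE2 : A' i ^ 2 + p * B' i ^ 2 - q * C' i ^ 2 = 2 * E := by
      have : (A' i : ℚ) ^ 2 + p * B' i ^ 2 - q * C' i ^ 2 = 2 * E := by
        rw [← hA2, ← hB2, ← hC2, ← hE, hd0]; ring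
      exact_mod_cast this
    have hpo : Odd (p : ℤ) := by rw [Int.odd_iff]; omega
    have hqo : Odd (q : ℤ) := by rw [Int.odd_iff]; omega
    have : Even (A' i ^ 2 + p * B' i ^ 2 - q * C' i ^ 2) := ⟨E, by rw [hE2]; ring⟩
    rw [← even_iff_two_dvd]
    rw [← Int.not_even_iff_odd] at hpo hqo
    simp only [Int.even_add, Int.even_sub, Int.even_mul, Int.even_pow, hpo, hqo] at this ⊢
    simpa using this
  · rw [← Int.cast_inj (α := ℚ), h0]; push_cast; ring
  · rw [← Int.cast_inj (α := ℚ)]; push_cast at h1 ⊢; linarith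
  · rw [← Int.cast_inj (α := ℚ)]; push_cast at h2 ⊢; linarith
  · exact_mod_cast h3

/-- Case `p ≡ 1`, `q ≡ 2, 3 (mod 4)`, for `α = 7 + ((1 + √p) / 2)² + (1 + √q)²`. -/
lemma no_five_one_other {p q : ℕ} (hp : p % 4 = 1) (hq : q % 4 = 2 ∨ q % 4 = 3) (hp17 : 17 ≤ p)
    (hq10 : 10 ≤ q) {a b c d : Fin 5 → ℚ}
    (h : FiveCoords p q (8 + (1 + p) / 4 + q) (1 / 2) 2 a b c d) : False := by
  have hp' : (17 : ℤ) ≤ p := by exact_mod_cast hp17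
  have hq' : (10 : ℤ) ≤ q := by exact_mod_cast hq10
  have hpq : (p * q) % 4 = 2 ∨ (p * q) % 4 = 3 := by
    rw [Nat.mul_mod, hp]; omega
  choose hint hnorm using h.int
  choose A B C D hA hB hC hD hAB hAC hAD using hint
  have eA := fun i => (even_of_mod (by omega) (hAC i)).1
  have eB : ∀ i, 2 ∣ B i := fun i => by
    have := parity_of_mod (by omega) (hAB i); have := eA i; omega
  have eC := fun i => (even_of_mod (by omega) (hAC i)).2
  have eD := fun i => (even_of_mod (by omega) (hAD i)).2
  choose A' hA' using eA
  choose B' hB' using eB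
  choose C' hC' using eC
  choose D' hD' using eD
  have hA2 : ∀ i, 2 * a i = A' i := fun i => by
    have := hA i; rw [hA' i] at this; push_cast at this; linarith
  have hB2 : ∀ i, 2 * b i = B' i := fun i => by
    have := hB i; rw [hB' i] at this; push_cast at this; linarith
  have hC2 : ∀ i, 2 * c i = C' i := fun i => by
    have := hC i; rw [hC' i] at this; push_cast at this; linarith
  have hD2 : ∀ i, 2 * d i = D' i := fun i => by
    have := hD i; rw [hD' i] at this; push_cast at this; linarith
  obtain ⟨h0, h1, h2, h3⟩ := h.scale 2 hA2 hB2 hC2 hD2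
  have hD0 : ∀ i, D' i = 0 := by
    intro i
    by_contra hne
    have hsum : ∑ i, (A' i ^ 2 + p * B' i ^ 2 + q * C' i ^ 2 + p * q * D' i ^ 2) =
        33 + (p : ℤ) + 4 * q := by
      rw [← Int.cast_inj (α := ℚ), h0]
      push_cast; ring
    have hle := term_le (p := p) (q := q) A' B' C' D' i
    rw [hsum] at hle
    have hpq' : 0 ≤ ((p : ℤ) - 17) * (q - 10) := mul_nonneg (by linarith) (by linarith)
    have h4 := mul_le_mul_of_nonneg_left (one_le_sq hne) (by positivity : (0 : ℤ) ≤ p * q)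
    have h1 := sq_nonneg (A' i)
    have h2 : 0 ≤ (p : ℤ) * B' i ^ 2 := by positivity
    have h3 : 0 ≤ (q : ℤ) * C' i ^ 2 := by positivity
    nlinarith
  have hd0 : ∀ i, d i = 0 := fun i => by simpa [hD0 i] using hD2 i
  -- The norm to `ℚ(√p)` gives `(A' - B')² ≡ q C'² (mod 4)`.
  have hpar : ∀ i, 2 ∣ A' i - B' i ∧ 2 ∣ C' i := by
    intro i
    obtain ⟨E, F, hE, hF, hEF⟩ := hnorm i
    have hE2 : A' i ^ 2 + p * B' i ^ 2 - q * C' i ^ 2 = 2 * E := by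
      have : (A' i : ℚ) ^ 2 + p * B' i ^ 2 - q * C' i ^ 2 = 2 * E := by
        rw [← hA2, ← hB2, ← hC2, ← hE, hd0]; ring
      exact_mod_cast this
    have hF2 : A' i * B' i = F := by
      have : (A' i : ℚ) * B' i = F := by
        rw [← hA2, ← hB2, ← hF, hd0]; ring
      exact_mod_cast this
    obtain ⟨k, hk⟩ := parity_of_mod (by omega) hEF
    obtain ⟨m, hm⟩ : ∃ m : ℤ, (p : ℤ) = 4 * m + 1 := ⟨p / 4, by omega⟩
    refine even_of_mod (n := q) (by omega) ⟨k - F - m * B' i ^ 2, ?_⟩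
    rw [hm] at hE2
    linear_combination hE2 - 2 * hF2 + 2 * hk
  choose hpar eC' using hpar
  choose C'' hC'' using eC'
  simp only [hD0, hC'', mul_zero, add_zero, zero_add, ne_eq, OfNat.ofNat_ne_zero,
    not_false_eq_true, zero_pow] at h0 h1 h2 h3
  have hac : ∑ i, A' i * (2 * C'' i) = 2 * ∑ i, A' i * C'' i := by
    rw [Finset.mul_sum]; exact Finset.sum_congr rfl fun i _ => by ring
  have hbc : ∑ i, B' i * (2 * C'' i) = 2 * ∑ i, B' i * C'' i := by
    rw [Finset.mul_sum]; exact Finset.sum_congr rfl fun i _ => by ring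
  rw [hac] at h2
  rw [hbc] at h3
  refine core_one_other hp' hq' (a := A') (b := B') (c := C'') (fun i => ?_) ?_ ?_ ?_ ?_
  · have := hpar i; omega
  · have : ∑ i, (A' i ^ 2 + p * B' i ^ 2 + 4 * q * C'' i ^ 2) =
        ∑ i, (A' i ^ 2 + p * B' i ^ 2 + q * (2 * C'' i) ^ 2) :=
      Finset.sum_congr rfl fun i _ => by ring
    rw [this, ← Int.cast_inj (α := ℚ), h0]; push_cast; ring
  · rw [← Int.cast_inj (α := ℚ)]; push_cast at h1 ⊢; linarith
  · rw [← Int.cast_inj (α := ℚ)]; push_cast at h2 ⊢; linarith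
  · rw [← Int.cast_inj (α := ℚ)]; push_cast at h3 ⊢; linarith

/-- Case `p ≡ 2`, `q ≡ 3 (mod 4)`, for `α = 7 + (1 + √p)² + (1 + √q)²`. Here `(√p + √p√q) / 2` is an
integer, so that a nonzero `d` may be a half-integer, but then so is `b`. -/
lemma no_five_two_three {p q : ℕ} (hp : p % 4 = 2) (hq : q % 4 = 3) (hp10 : 10 ≤ p)
    (hq11 : 11 ≤ q) {a b c d : Fin 5 → ℚ} (h : FiveCoords p q (9 + p + q) 2 2 a b c d) :
    False := by
  have hp' : (10 : ℤ) ≤ p := by exact_mod_cast hp10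
  have hq' : (11 : ℤ) ≤ q := by exact_mod_cast hq11
  have hpq : (p * q) % 4 = 2 := by rw [Nat.mul_mod, hp, hq]
  choose hint hnorm using h.int
  choose A B C D hA hB hC hD hAB hAC hAD using hint
  have eA := fun i => (even_of_mod (by omega) (hAB i)).1
  have eB := fun i => (even_of_mod (by omega) (hAB i)).2
  have eC := fun i => (even_of_mod (by omega) (hAC i)).2
  have eD := fun i => (even_of_mod (by omega) (hAD i)).2
  choose A' hA' using eA
  choose B' hB' using eB
  choose C' hC' using eC
  choose D' hD' using eD
  have hA2 : ∀ i, 2 * a i = A' i := fun i => by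
    have := hA i; rw [hA' i] at this; push_cast at this; linarith
  have hB2 : ∀ i, 2 * b i = B' i := fun i => by
    have := hB i; rw [hB' i] at this; push_cast at this; linarith
  have hC2 : ∀ i, 2 * c i = C' i := fun i => by
    have := hC i; rw [hC' i] at this; push_cast at this; linarith
  have hD2 : ∀ i, 2 * d i = D' i := fun i => by
    have := hD i; rw [hD' i] at this; push_cast at this; linarith
  obtain ⟨h0, h1, h2, h3⟩ := h.scale 2 hA2 hB2 hC2 hD2
  have hpar : ∀ i, 2 ∣ A' i ∧ 2 ∣ C' i ∧ 2 ∣ B' i + D' i := by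
    intro i
    obtain ⟨E, F, hE, hF, hEF⟩ := hnorm i
    obtain ⟨⟨e, rfl⟩, ⟨f, rfl⟩⟩ := even_of_mod (by omega) hEF
    have hE2 : A' i ^ 2 + p * B' i ^ 2 - q * C' i ^ 2 - p * q * D' i ^ 2 = 4 * e := by
      have : (A' i : ℚ) ^ 2 + p * B' i ^ 2 - q * C' i ^ 2 - p * q * D' i ^ 2 = 4 * e := by
        push_cast at hE
        rw [← hA2, ← hB2, ← hC2, ← hD2]; linear_combination 2 * hE
      exact_mod_cast this
    have hF2 : A' i * B' i - q * (C' i * D' i) = 2 * f := by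
      have : (A' i : ℚ) * B' i - q * (C' i * D' i) = 2 * f := by
        push_cast at hF
        rw [← hA2, ← hB2, ← hC2, ← hD2]; linear_combination hF
      exact_mod_cast this
    obtain ⟨m, hm⟩ : ∃ m : ℤ, (p : ℤ) = 4 * m + 2 := ⟨p / 4, by omega⟩
    obtain ⟨n, hn⟩ : ∃ n : ℤ, (q : ℤ) = 4 * n + 3 := ⟨q / 4, by omega⟩
    rw [hm, hn] at hE2
    rw [hn] at hF2
    generalize A' i = x at *
    generalize B' i = y at *
    generalize C' i = z at *
    generalize D' i = w at *
    clear * - hE2 hF2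
    rcases Int.even_or_odd' x with ⟨x, rfl | rfl⟩ <;>
    rcases Int.even_or_odd' y with ⟨y, rfl | rfl⟩ <;>
    rcases Int.even_or_odd' z with ⟨z, rfl | rfl⟩ <;>
    rcases Int.even_or_odd' w with ⟨w, rfl | rfl⟩ <;> ring_nf at hE2 hF2 <;> omega
  have hsum : ∑ i, (A' i ^ 2 + p * B' i ^ 2 + q * C' i ^ 2 + p * q * D' i ^ 2) =
      36 + 4 * (p : ℤ) + 4 * q := by
    rw [← Int.cast_inj (α := ℚ), h0]
    push_cast; ring
  have hab : ∑ i, (A' i * B' i + q * (C' i * D' i)) = 4 := by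
    rw [← Int.cast_inj (α := ℚ)]; push_cast at h1 ⊢; linarith
  have hD0 : ∀ i, D' i = 0 := by
    intro i
    by_contra hne
    have hpq' : 0 ≤ ((p : ℤ) - 10) * (q - 11) := mul_nonneg (by linarith) (by linarith)
    have hpq0 : (0 : ℤ) ≤ p * q := by positivity
    have hbig : (p : ℤ) + p * q ≤ p * B' i ^ 2 + p * q * D' i ^ 2 := by
      by_cases hev : 2 ∣ D' i
      · have h4 := mul_le_mul_of_nonneg_left (four_le_sq hne hev) hpq0
        have h2 : 0 ≤ (p : ℤ) * B' i ^ 2 := by positivity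
        nlinarith
      · have h4 := mul_le_mul_of_nonneg_left (one_le_sq hne) hpq0
        have := (hpar i).2.2
        have h2 := mul_le_mul_of_nonneg_left (one_le_sq (x := B' i) (by intro h0; omega))
          (Int.natCast_nonneg p)
        linarith
    -- For `(p, q) = (10, 11)` the bound is attained with no room for `A'` and `C'`, whence the
    -- coefficient of `√p` vanishes.
    have hle : p * B' i ^ 2 + p * q * D' i ^ 2 ≤ ∑ i, (p * B' i ^ 2 + p * q * D' i ^ 2) :=
      Finset.single_le_sum (f := fun i => p * B' i ^ 2 + p * q * D' i ^ 2)
        (fun i _ => by positivity) (Finset.mem_univ i)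
    have hsplit : ∑ i, (A' i ^ 2 + p * B' i ^ 2 + q * C' i ^ 2 + p * q * D' i ^ 2) =
        ∑ i, (A' i ^ 2 + q * C' i ^ 2) + ∑ i, (p * B' i ^ 2 + p * q * D' i ^ 2) := by
      rw [← Finset.sum_add_distrib]; exact Finset.sum_congr rfl fun i _ => by ring
    have hnn : ∀ j ∈ Finset.univ, 0 ≤ A' j ^ 2 + q * C' j ^ 2 := fun j _ => by positivity
    have hz : ∑ i, (A' i ^ 2 + q * C' i ^ 2) = 0 := by
      refine le_antisymm ?_ (Finset.sum_nonneg hnn)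
      nlinarith
    have hz' := (Finset.sum_eq_zero_iff_of_nonneg hnn).1 hz
    have hAC0 : ∀ j, A' j = 0 ∧ C' j = 0 := by
      intro j
      have hj := hz' j (Finset.mem_univ j)
      have h1 := sq_nonneg (A' j)
      have h2 := sq_nonneg (C' j)
      constructor
      · by_contra hne
        have := one_le_sq hne
        nlinarith
      · by_contra hne
        have := one_le_sq hne
        nlinarith
    simp [hAC0] at hab
  choose A'' hA'' using fun i => (hpar i).1
  choose C'' hC'' using fun i => (hpar i).2.1
  choose B'' hB'' using fun i => (by have := (hpar i).2.2; rwa [hD0, add_zero] at this : 2 ∣ B' i)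
  obtain ⟨g0, g1, g2, g3⟩ := h.scale 1 (A := A'') (B := B'') (C := C'') (D := 0)
    (fun i => by have := hA2 i; rw [hA'' i] at this; push_cast at this; linarith)
    (fun i => by have := hB2 i; rw [hB'' i] at this; push_cast at this; linarith)
    (fun i => by have := hC2 i; rw [hC'' i] at this; push_cast at this; linarith)
    (fun i => by simpa [hD0] using hD2 i)
  simp only [Pi.zero_apply, mul_zero, add_zero, zero_add, ne_eq, OfNat.ofNat_ne_zero,
    not_false_eq_true, zero_pow] at g0 g1 g2 g3
  refine core_two_three hp' (q := q) (by linarith) (a := A'') (b := B'') (c := C'') ?_ ?_ ?_ ?_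
  · rw [← Int.cast_inj (α := ℚ), g0]; push_cast; ring
  · rw [← Int.cast_inj (α := ℚ)]; push_cast at g1 ⊢; linarith
  · rw [← Int.cast_inj (α := ℚ)]; push_cast at g2 ⊢; linarith
  · exact_mod_cast g3

lemma natCast_mem_ringOfInt (K : IntermediateField ℚ ℝ) (n : ℕ) : (n : ℝ) ∈ ringOfInt K :=
  ⟨natCast_mem K n, isIntegral_algebraMap (R := ℤ) (A := ℝ) (x := n)⟩

lemma one_add_sqrt_mem {K : IntermediateField ℚ ℝ} {n : ℕ} (hn : √(n : ℝ) ∈ K) :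
    1 + √(n : ℝ) ∈ ringOfInt K := by
  refine ⟨add_mem (one_mem K) hn, isIntegral_one.add (IsIntegral.of_pow two_pos ?_)⟩
  rw [Real.sq_sqrt (Nat.cast_nonneg n)]
  exact (natCast_mem_ringOfInt K n).2

lemma half_one_add_sqrt_mem {K : IntermediateField ℚ ℝ} {n : ℕ} (hn : √(n : ℝ) ∈ K)
    (hn1 : n % 4 = 1) : (1 + √(n : ℝ)) / 2 ∈ ringOfInt K := by
  refine ⟨div_mem (add_mem (one_mem K) hn) (ofNat_mem K 2), ?_⟩
  obtain ⟨m, hm⟩ : ∃ m, n = 4 * m + 1 := ⟨n / 4, by omega⟩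
  have hs : √(n : ℝ) ^ 2 = 4 * m + 1 := by
    rw [Real.sq_sqrt (Nat.cast_nonneg n), hm]; push_cast; ring
  refine ⟨Polynomial.X ^ 2 - Polynomial.X - Polynomial.C (m : ℤ), by monicity!, ?_⟩
  simp
  linear_combination hs / 4

/-- Six squares suffice for `7 + x² + y²`, since `7 = 2² + 1² + 1² + 1²`. -/
lemma witness {K : IntermediateField ℚ ℝ} {x y : ℝ} (hx : x ∈ ringOfInt K) (hy : y ∈ ringOfInt K) :
    7 + x ^ 2 + y ^ 2 ∈ ringOfInt K ∧ IsSumOfSquaresIn (ringOfInt K) (7 + x ^ 2 + y ^ 2) := by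
  have h1 := natCast_mem_ringOfInt K 1
  have h2 := natCast_mem_ringOfInt K 2
  have h7 := natCast_mem_ringOfInt K 7
  push_cast at h1 h2 h7
  refine ⟨⟨add_mem (add_mem h7.1 (pow_mem hx.1 2)) (pow_mem hy.1 2),
    (h7.2.add (hx.2.pow 2)).add (hy.2.pow 2)⟩, 6, ![2, 1, 1, 1, x, y], fun i => ?_, ?_⟩
  · fin_cases i <;> simp <;> assumption
  · simp [Fin.sum_univ_six]; ring

lemma sqrt_left_mem (p q : ℕ) : √(p : ℝ) ∈ biqField p q :=
  IntermediateField.subset_adjoin _ _ (by simp)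

lemma sqrt_right_mem (p q : ℕ) : √(q : ℝ) ∈ biqField p q :=
  IntermediateField.subset_adjoin _ _ (by simp)

lemma biqField_comm (p q : ℕ) : biqField p q = biqField q p := by
  rw [biqField, biqField, Set.pair_comm]

lemma length_one_other {p q : ℕ} (hp : Squarefree p) (hq : Squarefree q) (hcop : Nat.Coprime p q)
    (hp4 : p % 4 = 1) (hq4 : q % 4 = 2 ∨ q % 4 = 3) (hp17 : 17 ≤ p) (hq10 : 10 ≤ q) :
    ∃ α ∈ ringOfInt (biqField p q), IsSumOfSquaresIn (ringOfInt (biqField p q)) α ∧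
      ¬ SumOfNSquaresIn (ringOfInt (biqField p q)) 5 α := by
  obtain ⟨h1, h2⟩ := witness (half_one_add_sqrt_mem (sqrt_left_mem p q) hp4)
    (one_add_sqrt_mem (sqrt_right_mem p q))
  refine ⟨_, h1, h2, fun h5 => ?_⟩
  have hs : √(p : ℝ) ^ 2 = p := Real.sq_sqrt (Nat.cast_nonneg p)
  have ht : √(q : ℝ) ^ 2 = q := Real.sq_sqrt (Nat.cast_nonneg q)
  obtain ⟨a, b, c, d, h⟩ := exists_fiveCoords hp hq (by omega) (by omega) hcop
    (k₀ := 8 + (1 + p) / 4 + q) (k₁ := 1 / 2) (k₂ := 2) (by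
      convert h5 using 1; push_cast; linear_combination -hs / 4 - ht)
  exact no_five_one_other hp4 hq4 hp17 hq10 h

lemma length_two_three {p q : ℕ} (hp : Squarefree p) (hq : Squarefree q) (hcop : Nat.Coprime p q)
    (hp4 : p % 4 = 2) (hq4 : q % 4 = 3) (hp10 : 10 ≤ p) (hq11 : 11 ≤ q) :
    ∃ α ∈ ringOfInt (biqField p q), IsSumOfSquaresIn (ringOfInt (biqField p q)) α ∧
      ¬ SumOfNSquaresIn (ringOfInt (biqField p q)) 5 α := by
  obtain ⟨h1, h2⟩ := witness (one_add_sqrt_mem (sqrt_left_mem p q))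
    (one_add_sqrt_mem (sqrt_right_mem p q))
  refine ⟨_, h1, h2, fun h5 => ?_⟩
  have hs : √(p : ℝ) ^ 2 = p := Real.sq_sqrt (Nat.cast_nonneg p)
  have ht : √(q : ℝ) ^ 2 = q := Real.sq_sqrt (Nat.cast_nonneg q)
  obtain ⟨a, b, c, d, h⟩ := exists_fiveCoords hp hq (by omega) (by omega) hcop
    (k₀ := 9 + p + q) (k₁ := 2) (k₂ := 2) (by
      convert h5 using 1; push_cast; linear_combination -hs - ht)
  exact no_five_two_three hp4 hq4 hp10 hq11 h

lemma length_one_one {p q : ℕ} (hp : Squarefree p) (hq : Squarefree q) (hcop : Nat.Coprime p q)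
    (hp4 : p % 4 = 1) (hq4 : q % 4 = 1) (hp17 : 17 ≤ p) (hq17 : 17 ≤ q) :
    ∃ α ∈ ringOfInt (biqField p q), IsSumOfSquaresIn (ringOfInt (biqField p q)) α ∧
      ¬ SumOfNSquaresIn (ringOfInt (biqField p q)) 5 α := by
  obtain ⟨h1, h2⟩ := witness (half_one_add_sqrt_mem (sqrt_left_mem p q) hp4)
    (half_one_add_sqrt_mem (sqrt_right_mem p q) hq4)
  refine ⟨_, h1, h2, fun h5 => ?_⟩
  have hs : √(p : ℝ) ^ 2 = p := Real.sq_sqrt (Nat.cast_nonneg p)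
  have ht : √(q : ℝ) ^ 2 = q := Real.sq_sqrt (Nat.cast_nonneg q)
  obtain ⟨a, b, c, d, h⟩ := exists_fiveCoords hp hq (by omega) (by omega) hcop
    (k₀ := 7 + (1 + p) / 4 + (1 + q) / 4) (k₁ := 1 / 2) (k₂ := 1 / 2) (by
      convert h5 using 1; push_cast; linear_combination -hs / 4 - ht / 4)
  exact no_five_one_one hp4 hq4 hp17 hq17 h

/-- The smallest admissible values in each residue class modulo `4`. -/
lemma residue_bound {n : ℕ} (hn : Squarefree n) (hn1 : 1 < n)
    (hS : n ∉ ({2, 3, 5, 6, 7, 13} : Set ℕ)) :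
    (n % 4 = 1 ∧ 17 ≤ n) ∨ (n % 4 = 2 ∧ 10 ≤ n) ∨ (n % 4 = 3 ∧ 11 ≤ n) := by
  simp only [Set.mem_insert_iff, Set.mem_singleton_iff, not_or] at hS
  have h4 : n % 4 ≠ 0 := fun h => by
    have := Nat.isUnit_iff.1 (hn 2 (Nat.dvd_of_mod_eq_zero h))
    omega
  have h9 : n ≠ 9 := by
    rintro rfl
    have := Nat.isUnit_iff.1 (hn 3 ⟨1, rfl⟩)
    omega
  omega

/-- Let `p, q > 1` be coprime squarefree integers, neither of which lies
in `{2, 3, 5, 6, 7, 13}`, and not both congruent to `3 (mod 4)`. Then the Pythagoras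
number of the ring of integers of `K = ℚ(√p, √q)` is at least `6`. -/
theorem pythagoras_coprime_ge_six
    (p q : ℕ) (hp : Squarefree p) (hq : Squarefree q) (hp1 : 1 < p) (hq1 : 1 < q)
    (hcop : Nat.Coprime p q)
    (hpS : p ∉ ({2, 3, 5, 6, 7, 13} : Set ℕ)) (hqS : q ∉ ({2, 3, 5, 6, 7, 13} : Set ℕ))
    (h34 : ¬ (p % 4 = 3 ∧ q % 4 = 3)) :
    ∃ α ∈ ringOfInt (biqField p q), IsSumOfSquaresIn (ringOfInt (biqField p q)) α ∧
      ¬ SumOfNSquaresIn (ringOfInt (biqField p q)) 5 α := by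

  have hcop' := hcop.symm
  rcases residue_bound hp hp1 hpS with ⟨hp4, hpb⟩ | ⟨hp4, hpb⟩ | ⟨hp4, hpb⟩ <;>
    rcases residue_bound hq hq1 hqS with ⟨hq4, hqb⟩ | ⟨hq4, hqb⟩ | ⟨hq4, hqb⟩
  · exact length_one_one hp hq hcop hp4 hq4 hpb hqb
  · exact length_one_other hp hq hcop hp4 (Or.inl hq4) hpb hqb
  · exact length_one_other hp hq hcop hp4 (Or.inr hq4) hpb (by omega)
  · rw [biqField_comm]
    exact length_one_other hq hp hcop' hq4 (Or.inl hp4) hqb hpb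
  · exact absurd (Nat.dvd_gcd (by omega : 2 ∣ p) (by omega : 2 ∣ q)) (by rw [hcop]; norm_num)
  · exact length_two_three hp hq hcop hp4 hq4 hpb hqb
  · rw [biqField_comm]
    exact length_one_other hq hp hcop' hq4 (Or.inr hp4) hqb (by omega)
  · rw [biqField_comm]
    exact length_two_three hq hp hcop' hq4 hp4 hqb hpb
  · exact absurd ⟨hp4, hq4⟩ h34
end

section
/- Let K be a totally real biquadratic field and let 1 < m < s < t be the three square-free integers whose square roots lie in K. Suppose m ≡ 1 (mod 4) and m ∉ {5, 13}. Then the element α₀ = 7 + ((1+√m)/2)² of O_K has length exactly 5 (it is a sum of 5 squares in O_K but not of 4); in particular the Pythagoras number of O_K is at least 5. -/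
/-! ### Linear independence of square roots -/

lemma eq_of_squarefree_of_sq_mul {a b : ℕ} (ha : Squarefree a) (hb : Squarefree b)
    {r : ℚ} (h : (a : ℚ) = r ^ 2 * b) : a = b := by
  have hd : (r.den : ℤ) ^ 2 * a = r.num ^ 2 * b := by
    have hden : (r.den : ℚ) ≠ 0 := by exact_mod_cast r.den_nz
    have : ((r.den : ℚ)) ^ 2 * a = (r.num : ℚ) ^ 2 * b := by
      have h2 : (r.num : ℚ) = r * r.den := (Rat.mul_den_eq_num r).symm
      rw [h2, h]; ring
    exact_mod_cast this
  have hn : r.den ^ 2 * a = r.num.natAbs ^ 2 * b := by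
    zify; rw [sq_abs]; exact hd
  have hc : Nat.Coprime (r.den ^ 2) (r.num.natAbs ^ 2) := (r.reduced.symm).pow 2 2
  have h1 : r.den ^ 2 ∣ b := hc.dvd_of_dvd_mul_left ⟨a, hn.symm⟩
  have h2 : r.num.natAbs ^ 2 ∣ a := hc.symm.dvd_of_dvd_mul_left ⟨b, hn⟩
  have h3 := Nat.isUnit_iff.mp (hb _ (by simpa [sq] using h1))
  have h4 := Nat.isUnit_iff.mp (ha _ (by simpa [sq] using h2))
  rw [h3, h4] at hn
  simpa using hn

lemma exists_int_of_squarefree_mul_sq {m : ℕ} (hm : Squarefree m) {b : ℚ} {n : ℤ}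
    (h : (m : ℚ) * b ^ 2 = n) : ∃ k : ℤ, b = k := by
  have hden : (b.den : ℚ) ≠ 0 := by exact_mod_cast b.den_nz
  have hd : (m : ℤ) * b.num ^ 2 = n * b.den ^ 2 := by
    have : (m : ℚ) * (b.num : ℚ) ^ 2 = n * (b.den : ℚ) ^ 2 := by
      have h2 : (b.num : ℚ) = b * b.den := (Rat.mul_den_eq_num b).symm
      rw [h2, ← h]; ring
    exact_mod_cast this
  have hc : IsCoprime ((b.den : ℤ) ^ 2) (b.num ^ 2) := by
    apply IsCoprime.pow
    rw [Int.isCoprime_iff_gcd_eq_one]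
    exact b.reduced.symm
  have h1 : (b.den : ℤ) ^ 2 ∣ m := hc.dvd_of_dvd_mul_right ⟨n, by rw [hd]; ring⟩
  have h1' : b.den ^ 2 ∣ m := by exact_mod_cast h1
  have h3 := Nat.isUnit_iff.mp (hm _ (by simpa [sq] using h1'))
  exact ⟨b.num, (Rat.coe_int_num_of_den_eq_one h3).symm⟩

lemma rat_sq_ne {m : ℕ} (hm : Squarefree m) (h1 : 1 < m) (r : ℚ) : (m : ℚ) ≠ r ^ 2 := by
  intro h
  have := eq_of_squarefree_of_sq_mul hm squarefree_one (r := r) (by simpa using h)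
  omega

lemma sqrt_ind_two {m : ℕ} (hm : Squarefree m) (h1 : 1 < m) {a b : ℚ}
    (h : (a : ℝ) + b * √(m : ℝ) = 0) : a = 0 ∧ b = 0 := by
  have hs : √(m : ℝ) ^ 2 = m := Real.sq_sqrt (by positivity)
  by_cases hb : b = 0
  · subst hb; simpa using h
  · exfalso
    have hbR : (b : ℝ) ≠ 0 := by exact_mod_cast hb
    refine rat_sq_ne hm h1 (a / b) ?_
    have : ((m : ℚ) : ℝ) = ((a / b : ℚ) : ℝ) ^ 2 := by
      push_cast
      have h2 : (a : ℝ) = - (b * √(m : ℝ)) := by linarith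
      rw [h2]; field_simp; exact hs.symm
    exact_mod_cast this

lemma sqrt_ind_four {m s : ℕ} (hm : Squarefree m) (hs : Squarefree s) (h1m : 1 < m) (h1s : 1 < s)
    (hne : m ≠ s) {a b c d : ℚ}
    (h : (a : ℝ) + b * √(m : ℝ) + (c + d * √(m : ℝ)) * √(s : ℝ) = 0) :
    a = 0 ∧ b = 0 ∧ c = 0 ∧ d = 0 := by
  have hm2 : √(m : ℝ) ^ 2 = m := Real.sq_sqrt (by positivity)
  have hs2 : √(s : ℝ) ^ 2 = s := Real.sq_sqrt (by positivity)
  by_cases hcd : c = 0 ∧ d = 0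
  · obtain ⟨rfl, rfl⟩ := hcd
    obtain ⟨rfl, rfl⟩ := sqrt_ind_two hm h1m (a := a) (b := b) (by simpa using h)
    simp
  exfalso
  -- multiply by the conjugate of the coefficient of `√s`, so that `√s ∈ ℚ(√m)`
  set n : ℚ := c ^ 2 - m * d ^ 2 with hn
  have hn0 : n ≠ 0 := by
    intro h0
    by_cases hd : d = 0
    · subst hd
      apply hcd
      simpa [hn] using h0
    · refine rat_sq_ne hm h1m (c / d) ?_
      field_simp
      linarith
  have hnR : (n : ℝ) ≠ 0 := by exact_mod_cast hn0
  set e : ℚ := (-(a * c) + m * b * d) / n with he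
  set f : ℚ := (a * d - b * c) / n with hf
  have key : √(s : ℝ) = e + f * √(m : ℝ) := by
    have : (n : ℝ) * √(s : ℝ) = n * e + n * f * √(m : ℝ) := by
      have e1 : (n : ℝ) * e = -(a * c) + m * b * d := by
        rw [he]; push_cast; field_simp
      have e2 : (n : ℝ) * f = a * d - b * c := by
        rw [hf]; push_cast; field_simp
      rw [e1, e2, hn]; push_cast
      linear_combination (c - d * √(m : ℝ)) * h + (b * d  + d ^ 2 * √(s : ℝ)) * hm2
    apply mul_left_cancel₀ hnR
    rw [this]; ring
  have h4 : ((e ^ 2 + f ^ 2 * m - s : ℚ) : ℝ) + ((2 * e * f : ℚ) : ℝ) * √(m : ℝ) = 0 := by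
    push_cast
    rw [← hs2, key]
    linear_combination -f ^ 2 * hm2
  obtain ⟨h5, h6⟩ := sqrt_ind_two hm h1m h4
  have h7 : e = 0 ∨ f = 0 := by simpa using h6
  rcases h7 with h7 | h7
  · rw [h7] at h5
    exact hne (eq_of_squarefree_of_sq_mul hs hm (r := f) (by linarith)).symm
  · rw [h7] at h5
    exact rat_sq_ne hs h1s e (by linarith)

/-! ### Integrality conditions on the coordinates -/

/-- Conjugation preserves integrality over `ℤ`, so the trace and the norm of an integral element of
a quadratic extension are integral. -/
lemma isIntegral_trace_norm {R : Type*} [CommRing R] {a : R} {z : QuadraticAlgebra R a 0}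
    (hz : IsIntegral ℤ z) :
    IsIntegral ℤ (2 * z.re) ∧ IsIntegral ℤ (z.re * z.re - a * z.im * z.im) := by
  have hz' : IsIntegral ℤ (star z) := by
    exact hz.map (starRingEnd (QuadraticAlgebra R a 0)).toIntAlgHom
  have hinj : Function.Injective (algebraMap R (QuadraticAlgebra R a 0)).toIntAlgHom := by
    intro x y hxy
    exact congrArg QuadraticAlgebra.re hxy
  constructor
  · rw [← isIntegral_algHom_iff _ hinj]
    have : (algebraMap R (QuadraticAlgebra R a 0)).toIntAlgHom (2 * z.re) = z + star z := by
      have := QuadraticAlgebra.algebraMap_trace_eq_add_star (z := z)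
      simpa [QuadraticAlgebra.trace_def] using this
    rw [this]; exact hz.add hz'
  · rw [← isIntegral_algHom_iff _ hinj]
    have : (algebraMap R (QuadraticAlgebra R a 0)).toIntAlgHom (z.re * z.re - a * z.im * z.im)
        = z * star z := by
      have := QuadraticAlgebra.algebraMap_norm_eq_mul_star z
      simpa [QuadraticAlgebra.norm_def] using this
    rw [this]; exact hz.mul hz'

lemma isIntegral_rat {r : ℚ} (h : IsIntegral ℤ r) : ∃ k : ℤ, r = k := by
  obtain ⟨k, hk⟩ := IsIntegrallyClosed.isIntegral_iff.mp h
  exact ⟨k, by simpa using hk.symm⟩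

/-- The homomorphism `ℚ[X]/(X² - m) → ℝ` sending `X` to `√m`. -/
noncomputable def quadReal (m : ℕ) : QuadraticAlgebra ℚ (m : ℚ) 0 →+* ℝ where
  toFun z := z.re + z.im * √(m : ℝ)
  map_one' := by simp [QuadraticAlgebra.re_one, QuadraticAlgebra.im_one]
  map_zero' := by simp
  map_add' x y := by simp; ring
  map_mul' x y := by
    have hs : √(m : ℝ) ^ 2 = m := Real.sq_sqrt (by positivity)
    simp
    linear_combination (-(x.im : ℝ) * y.im) * hs

/-- The homomorphism from the formal biquadratic algebra, a quadratic algebra over a quadratic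
algebra, to `ℝ` that sends the two generators to `√m` and `√s`. -/
noncomputable def biquadReal (m s : ℕ) :
    QuadraticAlgebra (QuadraticAlgebra ℚ (m : ℚ) 0) (s : QuadraticAlgebra ℚ (m : ℚ) 0) 0 →+* ℝ where
  toFun z := quadReal m z.re + quadReal m z.im * √(s : ℝ)
  map_one' := by simp [QuadraticAlgebra.re_one, QuadraticAlgebra.im_one]
  map_zero' := by simp
  map_add' x y := by simp; ring
  map_mul' x y := by
    have hs : √(s : ℝ) ^ 2 = s := Real.sq_sqrt (by positivity)
    simp
    linear_combination (-(quadReal m x.im) * quadReal m y.im) * hs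

lemma biquadReal_injective {m s : ℕ} (hm : Squarefree m) (hs : Squarefree s) (h1m : 1 < m)
    (h1s : 1 < s) (hne : m ≠ s) : Function.Injective (biquadReal m s) := by
  rw [injective_iff_map_eq_zero]
  intro z hz
  obtain ⟨h1, h2, h3, h4⟩ := sqrt_ind_four hm hs h1m h1s hne
    (a := z.re.re) (b := z.re.im) (c := z.im.re) (d := z.im.im)
    (by simpa [biquadReal, quadReal] using hz)
  ext <;> simpa

lemma sqrt_mul_sqrt_eq (u v w : ℕ) :
    √((u * v : ℕ) : ℝ) * √((u * w : ℕ) : ℝ) = u * √((v * w : ℕ) : ℝ) := by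
  rw [← Real.sqrt_mul (by positivity)]
  have : (((u * v : ℕ) : ℝ) * ((u * w : ℕ) : ℝ)) = (u : ℝ) ^ 2 * ((v * w : ℕ) : ℝ) := by
    push_cast; ring
  rw [this, Real.sqrt_mul (by positivity), Real.sqrt_sq (by positivity)]

/-- Necessary conditions for `(a + b√m + c√s + d√t) / 4` to be integral, where `m = uv`, `s = uw`,
`t = vw`. The trace to `ℚ(√m)` is `(a + b√m) / 2`, whose trace and norm to `ℚ` give the first two
conditions; the third is the trace to `ℚ` of the relative norm to `ℚ(√m)`. -/
lemma integral_conditions {u v w : ℕ} (hm : Squarefree (u * v)) (hs : Squarefree (u * w))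
    (h1m : 1 < u * v) (h1s : 1 < u * w) (hne : u * v ≠ u * w) {a b c d : ℚ}
    (h : IsIntegral ℤ (((a : ℝ) + b * √((u * v : ℕ) : ℝ) + c * √((u * w : ℕ) : ℝ)
      + d * √((v * w : ℕ) : ℝ)) / 4)) :
    (∃ k : ℤ, a = k) ∧ (∃ k : ℤ, a ^ 2 - (u * v : ℕ) * b ^ 2 = 4 * k) ∧
    (∃ k : ℤ, a ^ 2 + (u * v : ℕ) * b ^ 2 - (u * w : ℕ) * c ^ 2 - (v * w : ℕ) * d ^ 2 = 8 * k) := by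
  have hu : (u : ℚ) ≠ 0 := by rintro h; simp at h; subst h; simp at h1m
  have huR : (u : ℝ) ≠ 0 := by exact_mod_cast hu
  let z : QuadraticAlgebra (QuadraticAlgebra ℚ ((u * v : ℕ) : ℚ) 0)
      ((u * w : ℕ) : QuadraticAlgebra ℚ ((u * v : ℕ) : ℚ) 0) 0 :=
    ⟨⟨a / 4, b / 4⟩, ⟨c / 4, d / (4 * u)⟩⟩
  have hz : (biquadReal (u * v) (u * w)).toIntAlgHom z = ((a : ℝ) + b * √((u * v : ℕ) : ℝ)
      + c * √((u * w : ℕ) : ℝ) + d * √((v * w : ℕ) : ℝ)) / 4 := by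
    have h4 : √((v * w : ℕ) : ℝ) = √((u * v : ℕ) : ℝ) * √((u * w : ℕ) : ℝ) / u := by
      rw [sqrt_mul_sqrt_eq]; field_simp
    change (((a / 4 : ℚ) : ℝ) + ((b / 4 : ℚ) : ℝ) * √((u * v : ℕ) : ℝ))
      + (((c / 4 : ℚ) : ℝ) + ((d / (4 * u) : ℚ) : ℝ) * √((u * v : ℕ) : ℝ))
        * √((u * w : ℕ) : ℝ) = _
    rw [h4]; push_cast; field_simp
    ring
  rw [← hz, isIntegral_algHom_iff _ (biquadReal_injective hm hs h1m h1s hne)] at h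
  obtain ⟨hT, hN⟩ := isIntegral_trace_norm h
  obtain ⟨hTT, hTN⟩ := isIntegral_trace_norm hT
  obtain ⟨hNT, -⟩ := isIntegral_trace_norm hN
  obtain ⟨k1, hk1⟩ := isIntegral_rat hTT
  obtain ⟨k2, hk2⟩ := isIntegral_rat hTN
  obtain ⟨k3, hk3⟩ := isIntegral_rat hNT
  have two : (2 : QuadraticAlgebra ℚ ((u * v : ℕ) : ℚ) 0) = ⟨2, 0⟩ := rfl
  simp [z, two] at hk1 hk2 hk3
  refine ⟨⟨k1, by linarith⟩, ⟨k2, ?_⟩, ⟨k3, ?_⟩⟩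
  · rw [← hk2]; push_cast; ring
  · rw [← hk3]; push_cast; field_simp; ring

/-! ### The integer equations -/

lemma sq_emod_eight_of_odd {x : ℤ} (hx : ¬ Even x) : ∃ k, x ^ 2 = 8 * k + 1 := by
  obtain ⟨y, rfl⟩ := Int.not_even_iff_odd.mp hx
  obtain ⟨z, hz⟩ := Int.even_mul_succ_self y
  exact ⟨z, by linear_combination 4 * hz⟩

lemma exists_single_of_sum_sq_eq_one {f : Fin 4 → ℤ} (h : ∑ i, f i ^ 2 = 1) :
    ∃ i, f i ^ 2 = 1 ∧ ∀ j, j ≠ i → f j = 0 := by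
  have h0 : ∃ i, f i ≠ 0 := by
    by_contra! h0
    simp [h0] at h
  obtain ⟨i, hi⟩ := h0
  have hsplit := Finset.add_sum_erase Finset.univ (fun i => f i ^ 2) (Finset.mem_univ i)
  simp only [h] at hsplit
  have hpos : 0 < f i ^ 2 := by positivity
  have hnn : 0 ≤ ∑ j ∈ Finset.univ.erase i, f j ^ 2 := Finset.sum_nonneg fun _ _ => sq_nonneg _
  refine ⟨i, by omega, fun j hj => ?_⟩
  have hz : ∑ j ∈ Finset.univ.erase i, f j ^ 2 = 0 := by omega
  rw [Finset.sum_eq_zero_iff_of_nonneg (fun _ _ => sq_nonneg _)] at hz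
  simpa using hz j (by simp [hj])

lemma sum_sq_pos_of_ne_zero {f : Fin 4 → ℤ} (h : ¬ ∀ i, f i = 0) : 1 ≤ ∑ i, f i ^ 2 := by
  push Not at h
  obtain ⟨i, hi⟩ := h
  have h1 : f i ^ 2 ≤ ∑ i, f i ^ 2 :=
    Finset.single_le_sum (f := fun i => f i ^ 2) (fun _ _ => sq_nonneg _) (Finset.mem_univ i)
  have hpos : 0 < f i ^ 2 := by positivity
  omega

lemma odd_of_mul_emod_four {u v : ℤ} (h : u * v % 4 = 1) :
    ¬ Even u ∧ ¬ Even v ∧ ∃ k, v = u + 4 * k := by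
  have h1 : 0 ≤ u % 4 := by omega
  have h2 : u % 4 < 4 := by omega
  have h3 : 0 ≤ v % 4 := by omega
  have h4 : v % 4 < 4 := by omega
  rw [Int.mul_emod] at h
  simp only [Int.even_iff]
  have h5 : u % 4 = v % 4 ∧ u % 2 = 1 ∧ v % 2 = 1 := by
    generalize hx : u % 4 = x at *
    generalize hy : v % 4 = y at *
    interval_cases x <;> interval_cases y <;> simp at h <;> omega
  refine ⟨by omega, by omega, (v - u) / 4, by omega⟩

lemma sum_split (u v w : ℤ) (a b c d : Fin 4 → ℤ) :
    ∑ i, (a i ^ 2 + u * v * b i ^ 2 + u * w * c i ^ 2 + v * w * d i ^ 2) =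
      ∑ i, a i ^ 2 + u * v * ∑ i, b i ^ 2 + u * w * ∑ i, c i ^ 2 + v * w * ∑ i, d i ^ 2 := by
  simp only [Finset.sum_add_distrib, Finset.mul_sum]

/-- There is no solution with coordinates in `½ℤ`. The hypotheses `h0`–`h3` compare the coordinates
of `4 α₀ = 4 ∑ xᵢ²` for `xᵢ = (aᵢ + bᵢ√m + cᵢ√s + dᵢ√t) / 2`, and `hpar` is the parity condition
coming from integrality. Size and parity force `d = 0`, `∑ bᵢ² = 1` and `∑ cᵢ² ≤ 1`. If `c = 0`,
then `7` would be a sum of three integer squares; if `∑ cᵢ² = 1`, parity forces `4 ∣ s`. -/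
lemma no_half_solution {u v w : ℤ} (hu : 0 < u) (huv : u < v) (hvw : v < w)
    (hm4 : u * v % 4 = 1) (hs4 : u * w % 4 ≠ 0) (hm17 : 17 ≤ u * v)
    {a b c d : Fin 4 → ℤ}
    (hpar : ∀ i, Even (a i ^ 2 + u * v * b i ^ 2 - u * w * c i ^ 2 - v * w * d i ^ 2))
    (h0 : ∑ i, (a i ^ 2 + u * v * b i ^ 2 + u * w * c i ^ 2 + v * w * d i ^ 2) = 29 + u * v)
    (h1 : ∑ i, (a i * b i + w * (c i * d i)) = 1)
    (h2 : ∑ i, (a i * c i + v * (b i * d i)) = 0)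
    (h3 : ∑ i, (a i * d i + u * (b i * c i)) = 0) : False := by
  obtain ⟨hu2, hv2, -⟩ := odd_of_mul_emod_four hm4
  rw [sum_split] at h0
  have hA : 0 ≤ ∑ i, a i ^ 2 := Finset.sum_nonneg fun _ _ => sq_nonneg _
  have hB : 0 ≤ ∑ i, b i ^ 2 := Finset.sum_nonneg fun _ _ => sq_nonneg _
  have hC : 0 ≤ ∑ i, c i ^ 2 := Finset.sum_nonneg fun _ _ => sq_nonneg _
  have hD : 0 ≤ ∑ i, d i ^ 2 := Finset.sum_nonneg fun _ _ => sq_nonneg _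
  have hms : u * v < u * w := by nlinarith
  have hst : u * w < v * w := by nlinarith
  -- some `√m`-coordinate is nonzero, since otherwise `w` divides `1`
  have hB1 : 1 ≤ ∑ i, b i ^ 2 := by
    apply sum_sq_pos_of_ne_zero
    intro hb
    simp only [hb, mul_zero, zero_add, ← Finset.mul_sum] at h1
    have hw : w ∣ 1 := ⟨_, h1.symm⟩
    have := Int.le_of_dvd one_pos hw
    omega
  have hd : ∀ i, d i = 0 := by
    by_contra hd
    have hD1 := sum_sq_pos_of_ne_zero hd
    have ht : v * w ≤ 29 := by nlinarith
    have hv : v ≤ 4 := by nlinarith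
    nlinarith
  simp only [hd, mul_zero, add_zero, zero_add, zero_pow two_ne_zero, Finset.sum_const_zero,
    sub_zero] at *
  by_cases hc : ∀ i, c i = 0
  · simp only [hc, mul_zero, add_zero, zero_pow two_ne_zero, Finset.sum_const_zero, sub_zero] at *
    have hab : ∀ i, (Even (a i) ↔ Even (b i)) := fun i => by
      have := hpar i
      simp only [Int.even_add, Int.even_mul, Int.even_pow, hu2, hv2] at this
      tauto
    have hBle : ∑ i, b i ^ 2 ≤ 2 := by nlinarith
    have hBne : ∑ i, b i ^ 2 ≠ 2 := by
      intro h
      have : Even (∑ i, (b i ^ 2 - a i * b i)) := by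
        refine even_iff_two_dvd.mpr (Finset.dvd_sum fun i _ => even_iff_two_dvd.mp ?_)
        have := hab i
        simp only [Int.even_sub, Int.even_mul, Int.even_pow]
        tauto
      rw [Finset.sum_sub_distrib, h, h1] at this
      revert this; decide
    have hBeq : ∑ i, b i ^ 2 = 1 := by omega
    rw [hBeq] at h0
    obtain ⟨i, hi, hj⟩ := exists_single_of_sum_sq_eq_one hBeq
    have h1' : a i * b i = 1 := by
      rw [← h1, Finset.sum_eq_single i (fun j _ hji => by simp [hj j hji]) (by simp)]
    have hai : a i ^ 2 = 1 := by
      have : a i ^ 2 * b i ^ 2 = 1 := by rw [← mul_pow, h1', one_pow]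
      rwa [hi, mul_one] at this
    -- the remaining three coordinates are even and their halves would represent `7`
    have hev : ∀ j, j ≠ i → ∃ y, a j ^ 2 = 4 * y ∧ (y % 8 = 0 ∨ y % 8 = 1 ∨ y % 8 = 4) := by
      intro j hji
      obtain ⟨x, hx⟩ := (hab j).mpr (by simp [hj j hji])
      refine ⟨x ^ 2, by rw [hx]; ring, ?_⟩
      have h8 : x % 8 = 0 ∨ x % 8 = 1 ∨ x % 8 = 2 ∨ x % 8 = 3 ∨ x % 8 = 4 ∨ x % 8 = 5 ∨
        x % 8 = 6 ∨ x % 8 = 7 := by omega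
      rcases h8 with h | h | h | h | h | h | h | h <;> simp [pow_two, Int.mul_emod, h]
    have hsum : ∑ j, a j ^ 2 = 29 := by linarith
    rw [Fin.sum_univ_four] at hsum
    have hi4 : i = 0 ∨ i = 1 ∨ i = 2 ∨ i = 3 := by omega
    rcases hi4 with rfl | rfl | rfl | rfl
    · obtain ⟨x, hx, hx'⟩ := hev 1 (by decide)
      obtain ⟨y, hy, hy'⟩ := hev 2 (by decide)
      obtain ⟨z, hz, hz'⟩ := hev 3 (by decide)
      omega
    · obtain ⟨x, hx, hx'⟩ := hev 0 (by decide)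
      obtain ⟨y, hy, hy'⟩ := hev 2 (by decide)
      obtain ⟨z, hz, hz'⟩ := hev 3 (by decide)
      omega
    · obtain ⟨x, hx, hx'⟩ := hev 0 (by decide)
      obtain ⟨y, hy, hy'⟩ := hev 1 (by decide)
      obtain ⟨z, hz, hz'⟩ := hev 3 (by decide)
      omega
    · obtain ⟨x, hx, hx'⟩ := hev 0 (by decide)
      obtain ⟨y, hy, hy'⟩ := hev 1 (by decide)
      obtain ⟨z, hz, hz'⟩ := hev 2 (by decide)
      omega
  · have hC1 := sum_sq_pos_of_ne_zero hc
    have hBeq : ∑ i, b i ^ 2 = 1 := by nlinarith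
    rw [hBeq] at h0
    have hCeq : ∑ i, c i ^ 2 = 1 := by nlinarith
    rw [hCeq] at h0
    obtain ⟨i, hi, hj⟩ := exists_single_of_sum_sq_eq_one hBeq
    obtain ⟨k, hk, hl⟩ := exists_single_of_sum_sq_eq_one hCeq
    have hik : i ≠ k := by
      rintro rfl
      rw [Finset.sum_eq_single i (fun j _ hji => by simp [hj j hji]) (by simp)] at h3
      have : (b i * c i) ^ 2 = 1 := by rw [mul_pow, hi, hk, one_mul]
      have h0' : b i * c i = 0 := by
        rcases mul_eq_zero.mp h3 with h | h
        · omega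
        · exact h
      rw [h0'] at this; simp at this
    have h1' : a i * b i = 1 := by
      rw [← h1, Finset.sum_eq_single i (fun j _ hji => by simp [hj j hji]) (by simp)]
    have hai : a i ^ 2 = 1 := by
      have : a i ^ 2 * b i ^ 2 = 1 := by rw [← mul_pow, h1', one_pow]
      rwa [hi, mul_one] at this
    have hak : a k = 0 := by
      rw [Finset.sum_eq_single k (fun j _ hji => by simp [hl j hji]) (by simp)] at h2
      rcases mul_eq_zero.mp h2 with h | h
      · exact h
      · rw [h] at hk; simp at hk
    have hs2 : Even (u * w) := by
      have := hpar k
      rw [hak, hj k hik.symm, hk] at this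
      simpa using this
    have hab : ∀ i, (Even (a i) ↔ Even (b i)) := fun i => by
      have := hpar i
      simp only [Int.even_sub, Int.even_add, Int.even_mul, Int.even_pow, hu2, hv2] at this hs2
      tauto
    have hev : ∀ j, j ≠ i → ∃ y, a j ^ 2 = 4 * y := by
      intro j hji
      obtain ⟨x, hx⟩ := (hab j).mpr (by simp [hj j hji])
      exact ⟨x ^ 2, by rw [hx]; ring⟩
    have hsum : ∑ j, a j ^ 2 = 29 - u * w := by linarith
    have hdvd : (4 : ℤ) ∣ ∑ j ∈ Finset.univ.erase i, a j ^ 2 :=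
      Finset.dvd_sum fun j hjm => hev j (Finset.ne_of_mem_erase hjm)
    have hsplit := Finset.add_sum_erase Finset.univ (fun i => a i ^ 2) (Finset.mem_univ i)
    simp only [hsum, hai] at hsplit
    omega

/-- The coordinates with denominator `4` are all even. If `s ≢ 1 (mod 4)` this holds for every
integral element. If `s ≡ t ≡ 1 (mod 4)`, the four coordinates of an integer have equal parity; an
element with odd coordinates contributes `4` modulo `8` to the sum `h0`, one with even coordinates
contributes `0`, and so the number of odd ones is even. Two odd ones exceed the total. -/
lemma all_even {u v w : ℤ} (hu : 0 < u) (huv : u < v) (hvw : v < w)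
    (hm4 : u * v % 4 = 1) (hs4 : u * w % 4 ≠ 0) (hm17 : 17 ≤ u * v)
    {a b c d : Fin 4 → ℤ}
    (hab : ∀ i, 4 ∣ a i ^ 2 - u * v * b i ^ 2) (hac : ∀ i, 4 ∣ a i ^ 2 - u * w * c i ^ 2)
    (had : ∀ i, 4 ∣ a i ^ 2 - v * w * d i ^ 2)
    (hpar : ∀ i, 8 ∣ a i ^ 2 + u * v * b i ^ 2 - u * w * c i ^ 2 - v * w * d i ^ 2)
    (h0 : ∑ i, (a i ^ 2 + u * v * b i ^ 2 + u * w * c i ^ 2 + v * w * d i ^ 2) =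
      116 + 4 * (u * v)) (i : Fin 4) : Even (a i) ∧ Even (b i) ∧ Even (c i) ∧ Even (d i) := by
  obtain ⟨hu2, hv2, k, hk⟩ := odd_of_mul_emod_four hm4
  have four_even : ∀ {n : ℤ}, 4 ∣ n → Even n := fun h =>
    even_iff_two_dvd.mpr (dvd_trans (by norm_num) h)
  have hab2 : ∀ i, (Even (a i) ↔ Even (b i)) := fun i => by
    have := four_even (hab i)
    simp only [Int.even_sub, Int.even_mul, Int.even_pow, hu2, hv2] at this
    tauto
  by_cases hs1 : u * w % 4 = 1
  · obtain ⟨-, hw2, l, hl⟩ := odd_of_mul_emod_four hs1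
    have hac2 : ∀ i, (Even (a i) ↔ Even (c i)) := fun i => by
      have := four_even (hac i)
      simp only [Int.even_sub, Int.even_mul, Int.even_pow, hu2, hw2] at this
      tauto
    have had2 : ∀ i, (Even (a i) ↔ Even (d i)) := fun i => by
      have := four_even (had i)
      simp only [Int.even_sub, Int.even_mul, Int.even_pow, hv2, hw2] at this
      tauto
    suffices hall : ∀ i, Even (a i) from
      ⟨hall i, (hab2 i).mp (hall i), (hac2 i).mp (hall i), (had2 i).mp (hall i)⟩
    by_contra! hodd
    obtain ⟨j, hj⟩ := hodd
    set P : Fin 4 → ℤ := fun i =>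
      a i ^ 2 + u * v * b i ^ 2 + u * w * c i ^ 2 + v * w * d i ^ 2 with hP
    have hms : u * v < u * w := by nlinarith
    have hst : u * w < v * w := by nlinarith
    have hPnn : ∀ i, 0 ≤ P i := fun i => by
      have h1 : 0 < u * v := by linarith
      have h2 : 0 < u * w := by linarith
      have h3 : 0 < v * w := by linarith
      simp only [hP]; positivity
    -- a vector with odd coordinates contributes `4` modulo `8`, and at least `1 + m + s + t`
    have hPodd : ∀ i, ¬ Even (a i) → P i % 8 = 4 ∧ 1 + u * v + u * w + v * w ≤ P i := by
      intro i hi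
      obtain ⟨x, hx⟩ := sq_emod_eight_of_odd hi
      obtain ⟨y, hy⟩ := sq_emod_eight_of_odd (mt (hab2 i).mpr hi)
      obtain ⟨z, hz⟩ := sq_emod_eight_of_odd (mt (hac2 i).mpr hi)
      obtain ⟨r, hr⟩ := sq_emod_eight_of_odd (mt (had2 i).mpr hi)
      obtain ⟨q, hq⟩ := sq_emod_eight_of_odd hu2
      constructor
      · have : P i = 8 * (x + u * v * y + u * w * z + v * w * r + u * k + u * l + 2 * k * l
            + 3 * q) + 4 := by
          simp only [hP, hx, hy, hz, hr]
          rw [hl, hk]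
          linear_combination 3 * hq
        omega
      · have hy0 : 0 ≤ y := by have := sq_nonneg (b i); omega
        have hz0 : 0 ≤ z := by have := sq_nonneg (c i); omega
        have hr0 : 0 ≤ r := by have := sq_nonneg (d i); omega
        have hx0 : 0 ≤ x := by have := sq_nonneg (a i); omega
        have h1 : 0 ≤ u * v * y := by apply mul_nonneg <;> linarith
        have h2 : 0 ≤ u * w * z := by apply mul_nonneg <;> linarith
        have h3 : 0 ≤ v * w * r := by apply mul_nonneg <;> linarith
        simp only [hP, hx, hy, hz, hr]
        linarith
    have hPeven : ∀ i, Even (a i) → (8 : ℤ) ∣ P i := by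
      intro i hi
      obtain ⟨y, hy⟩ := (hac2 i).mp hi
      obtain ⟨z, hz⟩ := (had2 i).mp hi
      obtain ⟨r, hr⟩ := hpar i
      refine ⟨r + u * w * y ^ 2 + v * w * z ^ 2, ?_⟩
      simp only [hP]
      rw [hy, hz] at hr ⊢
      linear_combination hr
    -- hence a second vector has odd coordinates
    have hodd2 : ∃ l, l ≠ j ∧ ¬ Even (a l) := by
      by_contra! hcon
      have hdvd : (8 : ℤ) ∣ ∑ l ∈ Finset.univ.erase j, P l :=
        Finset.dvd_sum fun l hlm => hPeven l (hcon l (Finset.ne_of_mem_erase hlm))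
      have hsplit := Finset.add_sum_erase Finset.univ P (Finset.mem_univ j)
      have := (hPodd j hj).1
      have hPs : ∑ i, P i = 116 + 4 * (u * v) := h0
      omega
    obtain ⟨l', hlj, hl'⟩ := hodd2
    have hle : P j + P l' ≤ ∑ i, P i := by
      rw [← Finset.sum_pair hlj.symm]
      exact Finset.sum_le_sum_of_subset_of_nonneg (Finset.subset_univ _) fun i _ _ => hPnn i
    have h1 := (hPodd j hj).2
    have h2 := (hPodd l' hl').2
    have hvw4 : v + 4 ≤ w := by omega
    have ht : v * w ≤ 56 := by linarith
    have hv5 : v ≤ 5 := by nlinarith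
    have hu1 : u ≤ 1 := by omega
    nlinarith
  · have hw : u * w % 4 = 2 ∨ u * w % 4 = 3 := by omega
    have ht : v * w % 4 = u * w % 4 := by
      have : v * w = u * w + 4 * (k * w) := by rw [hk]; ring
      omega
    have hsq : ∀ x : ℤ, (Even x ∧ x ^ 2 % 4 = 0) ∨ (x ^ 2 % 4 = 1) := by
      intro x
      rcases Int.even_or_odd x with h | h
      · obtain ⟨y, rfl⟩ := h
        left
        exact ⟨⟨y, rfl⟩, by ring_nf; omega⟩
      · exact Or.inr (Int.sq_mod_four_eq_one_of_odd h)
    have key : ∀ {n x y : ℤ}, (n % 4 = 2 ∨ n % 4 = 3) → 4 ∣ x ^ 2 - n * y ^ 2 →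
        Even x ∧ Even y := by
      intro n x y hn hd
      have hd' := Int.emod_eq_zero_of_dvd hd
      rcases hsq x with ⟨hx, hx'⟩ | hx' <;> rcases hsq y with ⟨hy, hy'⟩ | hy' <;>
        rcases hn with hn | hn <;>
        first
        | exact ⟨hx, hy⟩
        | (exfalso; rw [Int.sub_emod, Int.mul_emod, hx', hy', hn] at hd'; revert hd'; decide)
    have h1 := key hw (hac i)
    have h2 := key (ht ▸ hw) (had i)
    exact ⟨h1.1, (hab2 i).mp h1.1, h1.2, h2.2⟩

/-! ### The structure of the field -/

open IntermediateField in
lemma finrank_adjoin_sqrt_le (p : ℕ) :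
    FiniteDimensional ℚ ℚ⟮√(p : ℝ)⟯ ∧ Module.finrank ℚ ℚ⟮√(p : ℝ)⟯ ≤ 2 := by
  have hroot : Polynomial.aeval (√(p : ℝ)) (Polynomial.X ^ 2 - Polynomial.C (p : ℚ)) = 0 := by
    simp
  have hmonic : (Polynomial.X ^ 2 - Polynomial.C (p : ℚ)).Monic :=
    Polynomial.monic_X_pow_sub_C _ two_ne_zero
  have hintegral : IsIntegral ℚ (√(p : ℝ)) := ⟨_, hmonic, by simp⟩
  refine ⟨IntermediateField.adjoin.finiteDimensional hintegral, ?_⟩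
  rw [IntermediateField.adjoin.finrank hintegral]
  refine (Polynomial.natDegree_le_of_dvd (minpoly.dvd ℚ _ hroot) hmonic.ne_zero).trans ?_
  rw [Polynomial.natDegree_X_pow_sub_C]

open IntermediateField in
lemma finrank_biqField_le (p q : ℕ) :
    FiniteDimensional ℚ (biqField p q) ∧ Module.finrank ℚ (biqField p q) ≤ 4 := by
  obtain ⟨hp1, hp2⟩ := finrank_adjoin_sqrt_le p
  obtain ⟨hq1, hq2⟩ := finrank_adjoin_sqrt_le q
  have h : biqField p q = ℚ⟮√(p : ℝ)⟯ ⊔ ℚ⟮√(q : ℝ)⟯ := by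
    rw [biqField, ← IntermediateField.adjoin_union, Set.singleton_union]
  rw [h]
  refine ⟨IntermediateField.finiteDimensional_sup _ _, ?_⟩
  refine (IntermediateField.finrank_sup_le _ _).trans ?_
  calc _ ≤ 2 * 2 := Nat.mul_le_mul hp2 hq2
    _ = 4 := rfl

/-- Since `1, √m, √s, √m√s` are independent and `[K : ℚ] ≤ 4`, they form a basis of `K`. -/
lemma exists_coords {K : IntermediateField ℚ ℝ} (hK : IsBiquadratic K) {m s : ℕ}
    (hm : Squarefree m) (hs : Squarefree s) (h1m : 1 < m) (h1s : 1 < s) (hne : m ≠ s)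
    (hmK : √(m : ℝ) ∈ K) (hsK : √(s : ℝ) ∈ K) {x : ℝ} (hx : x ∈ K) :
    ∃ a b c d : ℚ, x = a + b * √(m : ℝ) + (c + d * √(m : ℝ)) * √(s : ℝ) := by
  obtain ⟨p, q, -, -, -, -, -, rfl⟩ := hK
  obtain ⟨hfin, hle⟩ := finrank_biqField_le p q
  set K := biqField p q
  let e : Fin 4 → K := ![1, ⟨_, hmK⟩, ⟨_, hsK⟩, ⟨_, hmK⟩ * ⟨_, hsK⟩]
  have hind : LinearIndependent ℚ e := by
    rw [Fintype.linearIndependent_iff]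
    intro g hg
    have hg' := congrArg (fun y : K => (y : ℝ)) hg
    simp only [Fin.sum_univ_four, e] at hg'
    simp [Algebra.smul_def] at hg'
    obtain ⟨h0, h1, h2, h3⟩ := sqrt_ind_four hm hs h1m h1s hne
      (a := g 0) (b := g 1) (c := g 2) (d := g 3) (by rw [← hg']; ring)
    intro i
    fin_cases i <;> assumption
  have hcard := hind.fintype_card_le_finrank
  have hspan := hind.span_eq_top_of_card_eq_finrank' (by simp at hcard ⊢; omega)
  have hmem : (⟨x, hx⟩ : K) ∈ Submodule.span ℚ (Set.range e) := by rw [hspan]; trivial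
  rw [Submodule.mem_span_range_iff_exists_fun] at hmem
  obtain ⟨g, hg⟩ := hmem
  have hg' := congrArg (fun y : K => (y : ℝ)) hg
  simp only [Fin.sum_univ_four, e] at hg'
  simp [Algebra.smul_def] at hg'
  exact ⟨g 0, g 1, g 2, g 3, by rw [← hg']; ring⟩

/-- The third squarefree integer is `ms` up to a rational square. Squaring
`√t = a + b√m + c√s + d√m√s` and comparing coordinates shows that only one of `a, b, c, d` is
nonzero, and `t ∉ {m, s}` leaves only `d`. -/
lemma sq_mul_of_sqrt_mem {K : IntermediateField ℚ ℝ} (hK : IsBiquadratic K) {m s t : ℕ}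
    (hm : Squarefree m) (hs : Squarefree s) (ht : Squarefree t)
    (h1m : 1 < m) (hms : m < s) (hst : s < t)
    (hmK : √(m : ℝ) ∈ K) (hsK : √(s : ℝ) ∈ K) (htK : √(t : ℝ) ∈ K) :
    ∃ d : ℚ, (t : ℚ) = d ^ 2 * (m * s) := by
  have h1s : 1 < s := h1m.trans hms
  have hm2 : √(m : ℝ) ^ 2 = m := Real.sq_sqrt (by positivity)
  have hs2 : √(s : ℝ) ^ 2 = s := Real.sq_sqrt (by positivity)
  have ht2 : √(t : ℝ) ^ 2 = t := Real.sq_sqrt (by positivity)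
  obtain ⟨a, b, c, d, h⟩ := exists_coords hK hm hs h1m h1s hms.ne hmK hsK htK
  rw [h] at ht2
  obtain ⟨h0, h1, h2, h3⟩ := sqrt_ind_four hm hs h1m h1s hms.ne
    (a := a ^ 2 + m * b ^ 2 + s * c ^ 2 + m * s * d ^ 2 - t) (b := 2 * (a * b + s * (c * d)))
    (c := 2 * (a * c + m * (b * d))) (d := 2 * (a * d + b * c)) (by
      push_cast
      linear_combination ht2 - (b ^ 2 + 2 * b * d * √(s : ℝ) + d ^ 2 * √(s : ℝ) ^ 2) * hm2
        - (c ^ 2 + 2 * c * d * √(m : ℝ) + d ^ 2 * m) * hs2)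
  have ht1 : 1 < t := h1s.trans hst
  have ha : a = 0 := by
    by_contra ha
    have hb : b = 0 := by
      by_contra hb
      -- eliminating `d` gives `b (a² - s c²) = 0`
      have h4 : b * (a ^ 2 - s * c ^ 2) = 0 := by
        linear_combination (a / 2) * h1 - s * c / 2 * h3
      have h5 : a ^ 2 - s * c ^ 2 = 0 := by
        rcases mul_eq_zero.mp h4 with h | h
        · exact absurd h hb
        · exact h
      have hc : c ≠ 0 := by
        rintro rfl
        apply ha; simpa using h5
      refine rat_sq_ne hs h1s (a / c) ?_
      field_simp; linarith
    have hc : c = 0 := by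
      rw [hb] at h2
      simpa [ha] using h2
    have hd : d = 0 := by
      rw [hb] at h3
      simpa [ha] using h3
    rw [hb, hc, hd] at h0
    exact rat_sq_ne ht ht1 a (by linarith)
  subst ha
  have h1ms : (s : ℚ) ≠ 0 := by positivity
  have h1mm : (m : ℚ) ≠ 0 := by positivity
  by_cases hd : d = 0
  · exfalso
    subst hd
    have hbc : b = 0 ∨ c = 0 := by simpa using h3
    rcases hbc with rfl | rfl
    · have := eq_of_squarefree_of_sq_mul ht hs (r := c) (by linarith)
      omega
    · have := eq_of_squarefree_of_sq_mul ht hm (r := b) (by linarith)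
      omega
  · have hc : c = 0 := by simpa [hd, h1ms] using h1
    have hb : b = 0 := by simpa [hd, h1mm] using h2
    subst hc hb
    exact ⟨d, by linarith⟩

/-- The symmetric parametrization `m = uv`, `s = uw`, `t = vw`, with `u = gcd(m, s)`. -/
lemma exists_uvw {m s t : ℕ} (hm : Squarefree m) (hs : Squarefree s) (ht : Squarefree t)
    (h1m : 1 < m) {d : ℚ} (h : (t : ℚ) = d ^ 2 * (m * s)) :
    ∃ u v w : ℕ, m = u * v ∧ s = u * w ∧ t = v * w := by
  have hg : 0 < m.gcd s := Nat.gcd_pos_of_pos_left _ (by omega)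
  obtain ⟨v, w, hc, hv, hw⟩ := Nat.exists_coprime m s
  refine ⟨m.gcd s, v, w, by rw [mul_comm]; exact hv, by rw [mul_comm]; exact hw, ?_⟩
  have hvs : Squarefree v := hm.squarefree_of_dvd ⟨_, hv⟩
  have hws : Squarefree w := hs.squarefree_of_dvd ⟨_, hw⟩
  apply eq_of_squarefree_of_sq_mul ht ((Nat.squarefree_mul hc).mpr ⟨hvs, hws⟩)
    (r := d * (m.gcd s : ℕ))
  rw [h]
  have hvq : (m : ℚ) = v * (m.gcd s : ℕ) := by exact_mod_cast hv
  have hwq : (s : ℚ) = w * (m.gcd s : ℕ) := by exact_mod_cast hw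
  push_cast
  linear_combination d ^ 2 * s * hvq + d ^ 2 * v * (m.gcd s : ℕ) * hwq

/-- Elements of `O_K` have integer coordinates with denominator `4`, subject to congruences obtained
by applying `integral_conditions` over each of the three quadratic subfields. -/
lemma exists_int_coords {K : IntermediateField ℚ ℝ} (hK : IsBiquadratic K) {u v w : ℕ}
    (hm : Squarefree (u * v)) (hs : Squarefree (u * w)) (ht : Squarefree (v * w))
    (h1m : 1 < u * v) (hms : u * v < u * w) (hst : u * w < v * w)
    (hmK : √((u * v : ℕ) : ℝ) ∈ K) (hsK : √((u * w : ℕ) : ℝ) ∈ K)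
    {x : ℝ} (hx : x ∈ ringOfInt K) :
    ∃ a b c d : ℤ, x = (a + b * √((u * v : ℕ) : ℝ) + c * √((u * w : ℕ) : ℝ)
        + d * √((v * w : ℕ) : ℝ)) / 4 ∧
      4 ∣ a ^ 2 - u * v * b ^ 2 ∧ 4 ∣ a ^ 2 - u * w * c ^ 2 ∧ 4 ∣ a ^ 2 - v * w * d ^ 2 ∧
      8 ∣ a ^ 2 + u * v * b ^ 2 - u * w * c ^ 2 - v * w * d ^ 2 := by
  obtain ⟨hxK, hxI⟩ := hx
  obtain ⟨a', b', c', d', h⟩ := exists_coords hK hm hs h1m (h1m.trans hms) hms.ne hmK hsK hxK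
  obtain ⟨a, ha⟩ : ∃ a : ℚ, a = 4 * a' := ⟨_, rfl⟩
  obtain ⟨b, hb⟩ : ∃ b : ℚ, b = 4 * b' := ⟨_, rfl⟩
  obtain ⟨c, hc⟩ : ∃ c : ℚ, c = 4 * c' := ⟨_, rfl⟩
  obtain ⟨d, hd⟩ : ∃ d : ℚ, d = 4 * u * d' := ⟨_, rfl⟩
  have hx : x = ((a : ℝ) + b * √((u * v : ℕ) : ℝ) + c * √((u * w : ℕ) : ℝ)
      + d * √((v * w : ℕ) : ℝ)) / 4 := by
    rw [h, ha, hb, hc, hd]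
    push_cast [-Nat.cast_mul]
    linear_combination d' * sqrt_mul_sqrt_eq u v w
  rw [hx] at hxI
  obtain ⟨⟨A, hA⟩, ⟨k1, hk1⟩, ⟨k4, hk4⟩⟩ :=
    integral_conditions hm hs h1m (h1m.trans hms) hms.ne hxI
  -- the same statement over the other two quadratic subfields
  obtain ⟨-, ⟨k2, hk2⟩, -⟩ :=
    integral_conditions (u := w) (v := u) (w := v) (a := a) (b := c) (c := d) (d := b)
      (by rwa [mul_comm]) (by rwa [mul_comm])
      (by rw [mul_comm]; omega) (by rw [mul_comm]; omega) (by rw [mul_comm w, mul_comm w]; omega)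
      (by rw [mul_comm w u, mul_comm w v]; convert hxI using 1; ring)
  obtain ⟨-, ⟨k3, hk3⟩, -⟩ :=
    integral_conditions (u := v) (v := w) (w := u) (a := a) (b := d) (c := b) (d := c)
      ht (by rwa [mul_comm]) (by omega) (by rw [mul_comm]; omega) (by rw [mul_comm v u]; omega)
      (by rw [mul_comm v u, mul_comm w u]; convert hxI using 1; ring)
  rw [mul_comm w u] at hk2
  subst hA
  obtain ⟨B, rfl⟩ := exists_int_of_squarefree_mul_sq hm (b := b) (n := A ^ 2 - 4 * k1)
    (by push_cast at hk1 ⊢; linarith)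
  obtain ⟨C, rfl⟩ := exists_int_of_squarefree_mul_sq hs (b := c) (n := A ^ 2 - 4 * k2)
    (by push_cast at hk2 ⊢; linarith)
  obtain ⟨D, rfl⟩ := exists_int_of_squarefree_mul_sq ht (b := d) (n := A ^ 2 - 4 * k3)
    (by push_cast at hk3 ⊢; linarith)
  refine ⟨A, B, C, D, by rw [hx]; push_cast; rfl, ⟨k1, ?_⟩, ⟨k2, ?_⟩, ⟨k3, ?_⟩, ⟨k4, ?_⟩⟩
  · push_cast at hk1; exact_mod_cast hk1
  · push_cast at hk2; exact_mod_cast hk2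
  · push_cast at hk3; exact_mod_cast hk3
  · push_cast at hk4; exact_mod_cast hk4

/-! ### The element `α₀` -/

lemma isIntegral_half {m : ℕ} (hm4 : m % 4 = 1) : IsIntegral ℤ ((1 + √(m : ℝ)) / 2) := by
  have hm2 : √(m : ℝ) ^ 2 = m := Real.sq_sqrt (by positivity)
  obtain ⟨k, hk⟩ : ∃ k : ℕ, m = 4 * k + 1 := ⟨m / 4, by omega⟩
  have hkR : (m : ℝ) = 4 * k + 1 := by exact_mod_cast hk
  refine ⟨Polynomial.X ^ 2 - Polynomial.X - Polynomial.C (k : ℤ), by monicity!, ?_⟩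
  simp
  linear_combination hm2 / 4 + hkR / 4

/-- Let `K` be a totally real biquadratic field and `1 < m < s < t` the
three squarefree integers whose square roots lie in `K`. If `m ≡ 1 (mod 4)` and
`m ∉ {5, 13}`, then `α₀ = 7 + ((1+√m)/2)²` is a sum of `5` squares in `O_K` but not of
`4`; in particular `P(O_K) ≥ 5`. -/
theorem length_five_element_m_one_mod_four
    (K : IntermediateField ℚ ℝ) (hK : IsBiquadratic K)
    (m s t : ℕ) (hm : Squarefree m) (hs : Squarefree s) (ht : Squarefree t)
    (h1m : 1 < m) (hms : m < s) (hst : s < t)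
    (hmK : Real.sqrt m ∈ K) (hsK : Real.sqrt s ∈ K) (htK : Real.sqrt t ∈ K)
    (hm4 : m % 4 = 1) (hm5 : m ≠ 5) (hm13 : m ≠ 13) :
    SumOfNSquaresIn (ringOfInt K) 5 (7 + ((1 + Real.sqrt m) / 2) ^ 2) ∧
    ¬ SumOfNSquaresIn (ringOfInt K) 4 (7 + ((1 + Real.sqrt m) / 2) ^ 2) := by
  constructor
  · have h1 : (1 : ℝ) ∈ ringOfInt K := ⟨one_mem K, isIntegral_one⟩
    have h2 : (2 : ℝ) ∈ ringOfInt K :=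
      ⟨ofNat_mem K 2, by simpa using (isIntegral_algebraMap (R := ℤ) (A := ℝ) (x := 2))⟩
    have h3 : (1 + √(m : ℝ)) / 2 ∈ ringOfInt K :=
      ⟨div_mem (add_mem (one_mem K) hmK) (ofNat_mem K 2), isIntegral_half hm4⟩
    refine ⟨![2, 1, 1, 1, (1 + √(m : ℝ)) / 2], ?_, ?_⟩
    · intro i
      fin_cases i <;> assumption
    · simp [Fin.sum_univ_five]; ring
  · rintro ⟨x, hx, hsum⟩
    obtain ⟨δ, hδ⟩ := sq_mul_of_sqrt_mem hK hm hs ht h1m hms hst hmK hsK htK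
    obtain ⟨u, v, w, rfl, rfl, rfl⟩ := exists_uvw hm hs ht h1m hδ
    choose a b c d hxe hab hac had hpar using fun i =>
      exists_int_coords hK hm hs ht h1m hms hst hmK hsK (hx i)
    have hu0 : 0 < u := Nat.pos_of_ne_zero (by rintro rfl; simp at h1m)
    have hvw : v < w := lt_of_mul_lt_mul_left hms (Nat.zero_le u)
    have huv : u < v := lt_of_mul_lt_mul_right hst (Nat.zero_le w)
    have hm9 : u * v ≠ 9 := by
      intro h9
      rw [h9] at hm
      exact absurd (Nat.isUnit_iff.mp (hm 3 (by norm_num))) (by norm_num)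
    have hm17 : 17 ≤ u * v := by omega
    have hs4 : u * w % 4 ≠ 0 := by
      intro h
      exact absurd (Nat.isUnit_iff.mp (hs 2 (Nat.dvd_of_mod_eq_zero h))) (by norm_num)
    have hm2 : √((u * v : ℕ) : ℝ) ^ 2 = (u * v : ℕ) := Real.sq_sqrt (by positivity)
    have hs2 : √((u * w : ℕ) : ℝ) ^ 2 = (u * w : ℕ) := Real.sq_sqrt (by positivity)
    have ht2 : √((v * w : ℕ) : ℝ) ^ 2 = (v * w : ℕ) := Real.sq_sqrt (by positivity)
    have hMS := sqrt_mul_sqrt_eq u v w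
    have hMT : √((u * v : ℕ) : ℝ) * √((v * w : ℕ) : ℝ) = v * √((u * w : ℕ) : ℝ) := by
      have := sqrt_mul_sqrt_eq v u w
      rwa [mul_comm v u] at this
    have hST : √((u * w : ℕ) : ℝ) * √((v * w : ℕ) : ℝ) = w * √((u * v : ℕ) : ℝ) := by
      have := sqrt_mul_sqrt_eq w u v
      rwa [mul_comm w u, mul_comm w v] at this
    have hsq : ∀ i, 16 * x i ^ 2 =
        ((a i ^ 2 + u * v * b i ^ 2 + u * w * c i ^ 2 + v * w * d i ^ 2 : ℤ) : ℝ)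
        + 2 * ((a i * b i + w * (c i * d i) : ℤ) : ℝ) * √((u * v : ℕ) : ℝ)
        + 2 * ((a i * c i + v * (b i * d i) : ℤ) : ℝ) * √((u * w : ℕ) : ℝ)
        + 2 * ((a i * d i + u * (b i * c i) : ℤ) : ℝ) * √((v * w : ℕ) : ℝ) := by
      intro i
      rw [hxe i]
      push_cast at hm2 hs2 ht2 hMS hMT hST ⊢
      linear_combination b i ^ 2 * hm2 + c i ^ 2 * hs2 + d i ^ 2 * ht2
        + 2 * b i * c i * hMS + 2 * b i * d i * hMT + 2 * c i * d i * hST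
    have hsum16 : 16 * ∑ i, x i ^ 2 =
        ((∑ i, (a i ^ 2 + u * v * b i ^ 2 + u * w * c i ^ 2 + v * w * d i ^ 2) : ℤ) : ℝ)
        + 2 * ((∑ i, (a i * b i + w * (c i * d i)) : ℤ) : ℝ) * √((u * v : ℕ) : ℝ)
        + 2 * ((∑ i, (a i * c i + v * (b i * d i)) : ℤ) : ℝ) * √((u * w : ℕ) : ℝ)
        + 2 * ((∑ i, (a i * d i + u * (b i * c i)) : ℤ) : ℝ) * √((v * w : ℕ) : ℝ) := by
      rw [Finset.mul_sum, Finset.sum_congr rfl fun i _ => hsq i]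
      simp only [Int.cast_sum, Finset.mul_sum, Finset.sum_mul, ← Finset.sum_add_distrib]
    rw [← hsum] at hsum16
    generalize hE0 : ∑ i, (a i ^ 2 + u * v * b i ^ 2 + u * w * c i ^ 2 + v * w * d i ^ 2) = E0
      at hsum16
    generalize hE1 : ∑ i, (a i * b i + w * (c i * d i)) = E1 at hsum16
    generalize hE2 : ∑ i, (a i * c i + v * (b i * d i)) = E2 at hsum16
    generalize hE3 : ∑ i, (a i * d i + u * (b i * c i)) = E3 at hsum16
    have hu0' : (u : ℚ) ≠ 0 := by positivity
    have huR : (u : ℝ) ≠ 0 := by positivity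
    obtain ⟨q0, q1, q2, q3⟩ := sqrt_ind_four hm hs h1m (h1m.trans hms) hms.ne
      (a := E0 - (116 + 4 * (u * v))) (b := 2 * (E1 - 4)) (c := 2 * E2) (d := 2 * E3 / u) (by
        have hT : √((v * w : ℕ) : ℝ) = √((u * v : ℕ) : ℝ) * √((u * w : ℕ) : ℝ) / u := by
          rw [hMS]; field_simp
        rw [hT] at hsum16
        push_cast at hsum16 hm2 ⊢
        linear_combination -hsum16 + 4 * hm2)
    have e0 : E0 = 116 + 4 * (u * v) := by
      have : (E0 : ℚ) = 116 + 4 * (u * v) := by linarith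
      exact_mod_cast this
    have e1 : E1 = 4 := by
      have : (E1 : ℚ) = 4 := by linarith
      exact_mod_cast this
    have e2 : E2 = 0 := by
      have : (E2 : ℚ) = 0 := by linarith
      exact_mod_cast this
    have e3 : E3 = 0 := by
      have : (E3 : ℚ) = 0 := by simpa [hu0'] using q3
      exact_mod_cast this
    have hm4Z : (u : ℤ) * v % 4 = 1 := by exact_mod_cast hm4
    have hs4Z : (u : ℤ) * w % 4 ≠ 0 := by exact_mod_cast hs4
    have hm17Z : (17 : ℤ) ≤ u * v := by exact_mod_cast hm17
    have huZ : (0 : ℤ) < u := by exact_mod_cast hu0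
    have huvZ : (u : ℤ) < v := by exact_mod_cast huv
    have hvwZ : (v : ℤ) < w := by exact_mod_cast hvw
    have hev := all_even huZ huvZ hvwZ hm4Z hs4Z hm17Z hab hac had hpar (hE0.trans e0)
    choose A hA using fun i => (hev i).1
    choose B hB using fun i => (hev i).2.1
    choose C hC using fun i => (hev i).2.2.1
    choose D hD using fun i => (hev i).2.2.2
    rw [e0] at hE0
    rw [e1] at hE1
    rw [e2] at hE2
    rw [e3] at hE3
    simp only [hA, hB, hC, hD] at hE0 hE1 hE2 hE3 hpar
    refine no_half_solution huZ huvZ hvwZ hm4Z hs4Z hm17Z (a := A) (b := B) (c := C) (d := D)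
      ?_ ?_ ?_ ?_ ?_
    · intro i
      obtain ⟨k, hk⟩ := hpar i
      exact ⟨k, by linarith⟩
    · simp only [Fin.sum_univ_four] at hE0 ⊢; linarith
    · simp only [Fin.sum_univ_four] at hE1 ⊢; linarith
    · simp only [Fin.sum_univ_four] at hE2 ⊢; linarith
    · simp only [Fin.sum_univ_four] at hE3 ⊢; linarith
end
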